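/- arXiv:2509.06785 — 6 statements merged into one kernel-verified Lean document; each statement's English description precedes it below -/
import Mathlib

section
/- Let h = (h₀, …, h_n) be n+1 linearly independent homogeneous polynomials of degree d in ℂ[x₀, …, x_{m+1}], let J_h(x) be the (m+2) × (n+1) Jacobian matrix with entries ∂h_j/∂x_i, and let r be its rank over the function field ℂ(x₀, …, x_{m+1}). Let U = {x ∈ ℙ^{m+1} : rank J_h(x) = r}, let Y = {(x, z) ∈ ℙ^{m+1} × ℙ^n : J_h(x)·z = 0}, and let Y₀ be the Zariski closure of Y ∩ (U × ℙ^n). Then: if r = n+1, Y₀ = ∅; and if r < n+1, Y₀ is irreducible of dimension m+1+n−r. Consequently, the image pr₂(Y₀) under the projection pr₂ : ℙ^{m+1} × ℙ^n → ℙ^n is nonempty if and only if r < n+1, and in that case pr₂(Y₀) is irreducible. -/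
open MvPolynomial

noncomputable section

/-- Complex projective space `ℙ(ℂ^N) = ℙ^{N-1}(ℂ)`. -/
abbrev PSp (N : ℕ) := Projectivization ℂ (Fin N → ℂ)

/-- Polynomials in two groups of variables, the homogeneous coordinates of
`ℙ^{M-1} × ℙ^{N-1}`. -/
abbrev BiPoly (M N : ℕ) := MvPolynomial (Fin M ⊕ Fin N) ℂ

/-- A polynomial in two groups of variables is bihomogeneous if it is homogeneous in each
group of variables separately. -/
def IsBihomogeneous {M N : ℕ} (P : BiPoly M N) : Prop :=
  ∃ a b : ℕ,
    IsWeightedHomogeneous (Sum.elim (fun _ => 1) fun _ => 0) P a ∧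
    IsWeightedHomogeneous (Sum.elim (fun _ => 0) fun _ => 1) P b

/-- The zero set in `ℙ^{M-1} × ℙ^{N-1}` of a bihomogeneous polynomial. -/
def biZeroSet {M N : ℕ} (P : BiPoly M N) : Set (PSp M × PSp N) :=
  {p | eval (Sum.elim p.1.rep p.2.rep) P = 0}

/-- The Zariski topology on `ℙ^{M-1} × ℙ^{N-1}`: closed sets are the intersections of zero
sets of bihomogeneous polynomials. -/
def zariskiProd (M N : ℕ) : TopologicalSpace (PSp M × PSp N) :=
  TopologicalSpace.generateFrom
    {s | ∃ P : BiPoly M N, IsBihomogeneous P ∧ s = (biZeroSet P)ᶜ}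

/-- The Zariski topology on `ℙ^{N-1}`: closed sets are the intersections of zero sets of
homogeneous polynomials. -/
def zariski (N : ℕ) : TopologicalSpace (PSp N) :=
  TopologicalSpace.generateFrom
    {s | ∃ P : MvPolynomial (Fin N) ℂ, (∃ e, P.IsHomogeneous e) ∧
      s = {p : PSp N | eval p.rep P = 0}ᶜ}

/-! ### Bihomogeneous polynomials -/

lemma bihom_mul {M N : ℕ} {P Q : BiPoly M N} (hP : IsBihomogeneous P) (hQ : IsBihomogeneous Q) :
    IsBihomogeneous (P * Q) := by
  obtain ⟨a, b, h1, h2⟩ := hP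
  obtain ⟨c, e, h3, h4⟩ := hQ
  exact ⟨a + c, b + e, h1.mul h3, h2.mul h4⟩

lemma bihom_one {M N : ℕ} : IsBihomogeneous (1 : BiPoly M N) :=
  ⟨0, 0, isWeightedHomogeneous_one _ _, isWeightedHomogeneous_one _ _⟩

lemma bihom_of_prod {M N : ℕ} {P : BiPoly M N} {c : ℕ × ℕ}
    (hP : IsWeightedHomogeneous (Sum.elim (fun _ => ((1 : ℕ), (0 : ℕ))) fun _ => (0, 1)) P c) :
    IsBihomogeneous P := by
  refine ⟨c.1, c.2, ?_, ?_⟩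
  · intro d hd
    have := congrArg Prod.fst (hP hd)
    rw [← this, Finsupp.weight_apply, Finsupp.weight_apply, Finsupp.sum, Finsupp.sum,
      Prod.fst_sum]
    refine Finset.sum_congr rfl fun i _ => ?_
    cases i <;> simp
  · intro d hd
    have := congrArg Prod.snd (hP hd)
    rw [← this, Finsupp.weight_apply, Finsupp.weight_apply, Finsupp.sum, Finsupp.sum,
      Prod.snd_sum]
    refine Finset.sum_congr rfl fun i _ => ?_
    cases i <;> simp

/-- Scaling the variables of a weighted homogeneous polynomial. -/
lemma weighted_eval_scale {σ : Type*} {P : MvPolynomial σ ℂ} {w : σ → ℕ} {a : ℕ}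
    (hP : IsWeightedHomogeneous w P a) (l : ℂ) (x : σ → ℂ) :
    eval (fun i => l ^ w i * x i) P = l ^ a * eval x P := by
  rw [eval_eq, eval_eq, Finset.mul_sum]
  refine Finset.sum_congr rfl fun d hd => ?_
  have := hP (mem_support_iff.mp hd)
  rw [Finsupp.weight_apply, Finsupp.sum] at this
  simp_rw [mul_pow, Finset.prod_mul_distrib, ← pow_mul]
  rw [Finset.prod_pow_eq_pow_sum, ← this]
  have : ∑ i ∈ d.support, w i * d i = ∑ i ∈ d.support, d i • w i :=
    Finset.sum_congr rfl fun i _ => by simp [mul_comm]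
  rw [this]; ring

lemma bihom_scale {M N : ℕ} {P : BiPoly M N} {a b : ℕ}
    (h1 : IsWeightedHomogeneous (Sum.elim (fun _ => 1) fun _ => 0) P a)
    (h2 : IsWeightedHomogeneous (Sum.elim (fun _ => 0) fun _ => 1) P b)
    (l u : ℂ) (x : Fin M → ℂ) (z : Fin N → ℂ) :
    eval (Sum.elim (l • x) (u • z)) P = l ^ a * u ^ b * eval (Sum.elim x z) P := by
  rw [mul_assoc, ← weighted_eval_scale h2 u, ← weighted_eval_scale h1 l]
  congr 1
  congr 1
  funext i
  cases i <;> simp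

lemma bihom_scale_ne {M N : ℕ} {P : BiPoly M N} (hP : IsBihomogeneous P)
    {l u : ℂ} (hl : l ≠ 0) (hu : u ≠ 0) (x : Fin M → ℂ) (z : Fin N → ℂ) :
    eval (Sum.elim (l • x) (u • z)) P = 0 ↔ eval (Sum.elim x z) P = 0 := by
  obtain ⟨a, b, h1, h2⟩ := hP
  rw [bihom_scale h1 h2]
  simp [hl, hu]

/-- Nonvanishing of a polynomial on a bicone is detected by bihomogeneous components. -/
lemma exists_component {M N : ℕ} (P : BiPoly M N) (x₁ : Fin M → ℂ) (z₁ : Fin N → ℂ)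
    (h1 : eval (Sum.elim x₁ z₁) P ≠ 0) :
    ∃ P' : BiPoly M N, IsBihomogeneous P' ∧ eval (Sum.elim x₁ z₁) P' ≠ 0 ∧
      ∀ x z, eval (Sum.elim x z) P' ≠ 0 →
        ∃ l u : ℂ, l ≠ 0 ∧ u ≠ 0 ∧ eval (Sum.elim (l • x) (u • z)) P ≠ 0 := by
  classical
  set w : Fin M ⊕ Fin N → ℕ × ℕ := Sum.elim (fun _ => ((1 : ℕ), (0 : ℕ))) fun _ => (0, 1) with hw
  have hfin := weightedHomogeneousComponent_finsupp (w := w) P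
  set S : Finset (ℕ × ℕ) := hfin.toFinset with hS
  have hsum : P = ∑ c ∈ S, weightedHomogeneousComponent w c P := by
    conv_lhs => rw [← finsum_weightedHomogeneousComponent w P]
    exact finsum_eq_sum _ hfin
  have hex : ∃ c ∈ S, eval (Sum.elim x₁ z₁) (weightedHomogeneousComponent w c P) ≠ 0 := by
    by_contra! hcon
    apply h1
    rw [hsum, map_sum]
    exact Finset.sum_eq_zero hcon
  obtain ⟨c, hcS, hc⟩ := hex
  refine ⟨_, bihom_of_prod (weightedHomogeneousComponent_isWeightedHomogeneous c P), hc, ?_⟩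
  intro x z hxz
  let mon : ℕ × ℕ → (Fin 2 →₀ ℕ) := fun c => Finsupp.single 0 c.1 + Finsupp.single 1 c.2
  have hmon : Function.Injective mon := by
    intro c c' hcc
    have e0 := DFunLike.congr_fun hcc 0
    have e1 := DFunLike.congr_fun hcc 1
    simp [mon] at e0 e1
    exact Prod.ext e0 e1
  let F : MvPolynomial (Fin 2) ℂ :=
    ∑ c ∈ S, monomial (mon c) (eval (Sum.elim x z) (weightedHomogeneousComponent w c P))
  have hF : F ≠ 0 := by
    intro h0
    have : coeff (mon c) F = eval (Sum.elim x z) (weightedHomogeneousComponent w c P) := by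
      simp only [F, coeff_sum, coeff_monomial, hmon.eq_iff]
      simp [hcS]
    rw [h0] at this
    exact hxz (by simpa using this.symm)
  have hF' : F * (X 0 * X 1) ≠ 0 := mul_ne_zero hF (mul_ne_zero (X_ne_zero _) (X_ne_zero _))
  obtain ⟨s, hs⟩ : ∃ s, eval s (F * (X 0 * X 1)) ≠ 0 := by
    by_contra! hcon
    exact hF' (MvPolynomial.funext fun s => by rw [hcon s, map_zero])
  simp only [map_mul, eval_X] at hs
  refine ⟨s 0, s 1, fun h => hs (by simp [h]), fun h => hs (by simp [h]), ?_⟩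
  have key : eval (Sum.elim (s 0 • x) (s 1 • z)) P = eval s F := by
    conv_lhs => rw [hsum]
    simp only [F, map_sum]
    refine Finset.sum_congr rfl fun c _ => ?_
    have hb := weightedHomogeneousComponent_isWeightedHomogeneous (w := w) c P
    have hc1 : IsWeightedHomogeneous (Sum.elim (fun _ => 1) fun _ => 0)
        (weightedHomogeneousComponent w c P) c.1 := by
      intro d hd
      have := congrArg Prod.fst (hb hd)
      rw [← this, Finsupp.weight_apply, Finsupp.weight_apply, Finsupp.sum, Finsupp.sum,
        Prod.fst_sum]
      refine Finset.sum_congr rfl fun i _ => ?_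
      cases i <;> simp [w]
    have hc2 : IsWeightedHomogeneous (Sum.elim (fun _ => 0) fun _ => 1)
        (weightedHomogeneousComponent w c P) c.2 := by
      intro d hd
      have := congrArg Prod.snd (hb hd)
      rw [← this, Finsupp.weight_apply, Finsupp.weight_apply, Finsupp.sum, Finsupp.sum,
        Prod.snd_sum]
      refine Finset.sum_congr rfl fun i _ => ?_
      cases i <;> simp [w]
    rw [bihom_scale hc1 hc2, eval_monomial]
    simp [mon, Finsupp.prod_fintype, Fin.prod_univ_two]
    ring
  rw [key]
  exact fun h => hs (by simp [h])


/-! ### The Zariski topology -/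

lemma biZeroSet_mul {M N : ℕ} (P Q : BiPoly M N) :
    biZeroSet (P * Q) = biZeroSet P ∪ biZeroSet Q := by
  ext p
  simp [biZeroSet]

lemma zariskiProd_basis (M N : ℕ) : @TopologicalSpace.IsTopologicalBasis _ (zariskiProd M N)
    {s | ∃ P : BiPoly M N, IsBihomogeneous P ∧ s = (biZeroSet P)ᶜ} := by
  let _ := zariskiProd M N
  have := TopologicalSpace.isTopologicalBasis_of_subbasis_of_inter
    (r := {s | ∃ P : BiPoly M N, IsBihomogeneous P ∧ s = (biZeroSet P)ᶜ}) rfl (by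
      rintro s ⟨P, hP, rfl⟩ t ⟨Q, hQ, rfl⟩
      exact ⟨P * Q, bihom_mul hP hQ, by rw [biZeroSet_mul, Set.compl_union]⟩)
  rwa [Set.insert_eq_of_mem] at this
  exact ⟨1, bihom_one, by ext p; simp [biZeroSet]⟩

lemma mem_zclosure_iff {M N : ℕ} (A : Set (PSp M × PSp N)) (p : PSp M × PSp N) :
    p ∈ @closure _ (zariskiProd M N) A ↔
      ∀ P : BiPoly M N, IsBihomogeneous P → A ⊆ biZeroSet P → p ∈ biZeroSet P := by
  let _ := zariskiProd M N
  rw [(zariskiProd_basis M N).mem_closure_iff]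
  constructor
  · intro h P hP hA
    by_contra hp
    obtain ⟨q, hq1, hq2⟩ := h _ ⟨P, hP, rfl⟩ hp
    exact hq1 (hA hq2)
  · rintro h _ ⟨P, hP, rfl⟩ hp
    by_contra hne
    refine hp (h P hP fun q hq => ?_)
    by_contra hq'
    exact hne ⟨q, hq', hq⟩

lemma zclosure_subset_biZeroSet {M N : ℕ} {A : Set (PSp M × PSp N)} {P : BiPoly M N}
    (hP : IsBihomogeneous P) :
    @closure _ (zariskiProd M N) A ⊆ biZeroSet P ↔ A ⊆ biZeroSet P := by
  constructor
  · intro h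
    exact (@subset_closure _ (zariskiProd M N) A).trans h
  · intro h p hp
    exact (mem_zclosure_iff A p).1 hp P hP h

lemma isOpen_compl_biZeroSet {M N : ℕ} {P : BiPoly M N} (hP : IsBihomogeneous P) :
    @IsOpen _ (zariskiProd M N) (biZeroSet P)ᶜ :=
  TopologicalSpace.isOpen_generateFrom_of_mem ⟨P, hP, rfl⟩

lemma zirreducible_of {M N : ℕ} {A : Set (PSp M × PSp N)} (hne : A.Nonempty)
    (h : ∀ P Q : BiPoly M N, IsBihomogeneous P → IsBihomogeneous Q →
      A ⊆ biZeroSet (P * Q) → A ⊆ biZeroSet P ∨ A ⊆ biZeroSet Q) :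
    @IsIrreducible _ (zariskiProd M N) A := by
  let _ := zariskiProd M N
  refine ⟨hne, ?_⟩
  rintro u v hu hv ⟨p, hpA, hpu⟩ ⟨q, hqA, hqv⟩
  obtain ⟨_, ⟨P, hP, rfl⟩, hpP, hPu⟩ := (zariskiProd_basis M N).exists_subset_of_mem_open hpu hu
  obtain ⟨_, ⟨Q, hQ, rfl⟩, hqQ, hQv⟩ := (zariskiProd_basis M N).exists_subset_of_mem_open hqv hv
  by_contra hcon
  rcases h P Q hP hQ (by
    intro s hs
    by_contra hs'
    rw [biZeroSet_mul, Set.mem_union, not_or] at hs'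
    exact hcon ⟨s, hs, hPu hs'.1, hQv hs'.2⟩) with h' | h'
  · exact hpP (h' hpA)
  · exact hqQ (h' hqA)

lemma exists_of_zirreducible {M N : ℕ} {A : Set (PSp M × PSp N)}
    (h : @IsIrreducible _ (zariskiProd M N) A) {P Q : BiPoly M N}
    (hP : IsBihomogeneous P) (hQ : IsBihomogeneous Q)
    (hPA : ¬ A ⊆ biZeroSet P) (hQA : ¬ A ⊆ biZeroSet Q) :
    ∃ p ∈ A, p ∉ biZeroSet P ∧ p ∉ biZeroSet Q := by
  obtain ⟨p, hp, hp'⟩ := Set.not_subset.1 hPA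
  obtain ⟨q, hq, hq'⟩ := Set.not_subset.1 hQA
  obtain ⟨s, hs, h1, h2⟩ := h.2 _ _ (isOpen_compl_biZeroSet hP) (isOpen_compl_biZeroSet hQ)
    ⟨p, hp, hp'⟩ ⟨q, hq, hq'⟩
  exact ⟨s, hs, h1, h2⟩

lemma continuous_snd_zariski (M N : ℕ) :
    @Continuous _ _ (zariskiProd M N) (zariski N) (Prod.snd : PSp M × PSp N → PSp N) := by
  let _ := zariskiProd M N
  refine continuous_generateFrom_iff.2 ?_
  rintro _ ⟨P, ⟨e, he⟩, rfl⟩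
  refine TopologicalSpace.isOpen_generateFrom_of_mem ⟨rename Sum.inr P, ⟨0, e, ?_, ?_⟩, ?_⟩
  · intro d hd
    obtain ⟨u, rfl, hu⟩ := coeff_rename_ne_zero _ _ _ hd
    rw [Finsupp.weight_apply, Finsupp.sum_mapDomain_index (by simp) (by intros; simp [add_mul])]
    simp
  · intro d hd
    obtain ⟨u, rfl, hu⟩ := coeff_rename_ne_zero _ _ _ hd
    rw [← he hu, Finsupp.weight_apply, Finsupp.weight_apply,
      Finsupp.sum_mapDomain_index (by simp) (by intros; simp [add_mul])]
    simp
  · ext p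
    simp only [Set.mem_preimage, Set.mem_compl_iff, Set.mem_ofPred_eq, biZeroSet, eval_rename]
    rfl

/-! ### Cones -/

lemma mk_mem_biZeroSet {M N : ℕ} {P : BiPoly M N} (hP : IsBihomogeneous P)
    {x : Fin M → ℂ} {z : Fin N → ℂ} (hx : x ≠ 0) (hz : z ≠ 0) :
    ((Projectivization.mk ℂ x hx, Projectivization.mk ℂ z hz) : PSp M × PSp N) ∈ biZeroSet P ↔
      eval (Sum.elim x z) P = 0 := by
  obtain ⟨a, ha⟩ := Projectivization.exists_smul_eq_mk_rep ℂ x hx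
  obtain ⟨b, hb⟩ := Projectivization.exists_smul_eq_mk_rep ℂ z hz
  rw [biZeroSet, Set.mem_ofPred_eq, ← ha, ← hb]
  exact bihom_scale_ne hP a.ne_zero b.ne_zero x z

lemma mk_smul_eq {N : ℕ} {l : ℂ} (p : PSp N) (h : l • p.rep ≠ 0) :
    Projectivization.mk ℂ (l • p.rep) h = p := by
  conv_rhs => rw [← p.mk_rep]
  rw [Projectivization.mk_eq_mk_iff']
  exact ⟨l, rfl⟩

/-- The ideal of polynomials vanishing on the bicone over `A`. -/
def coneIdeal {M N : ℕ} (A : Set (PSp M × PSp N)) : Ideal (BiPoly M N) where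
  carrier := {P | ∀ p ∈ A, ∀ l u : ℂ, l ≠ 0 → u ≠ 0 →
    eval (Sum.elim (l • p.1.rep) (u • p.2.rep)) P = 0}
  add_mem' := by
    intro P Q hP hQ p hp l u hl hu
    rw [map_add, hP p hp l u hl hu, hQ p hp l u hl hu, add_zero]
  zero_mem' := by
    intro p hp l u hl hu
    rw [map_zero]
  smul_mem' := by
    intro c P hP p hp l u hl hu
    rw [smul_eq_mul, map_mul, hP p hp l u hl hu, mul_zero]

lemma mem_coneIdeal {M N : ℕ} {A : Set (PSp M × PSp N)} {P : BiPoly M N} :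
    P ∈ coneIdeal A ↔ ∀ p ∈ A, ∀ l u : ℂ, l ≠ 0 → u ≠ 0 →
      eval (Sum.elim (l • p.1.rep) (u • p.2.rep)) P = 0 := Iff.rfl

lemma coneIdeal_anti {M N : ℕ} {A B : Set (PSp M × PSp N)} (h : A ⊆ B) :
    coneIdeal B ≤ coneIdeal A := fun _ hP p hp => hP p (h hp)

lemma bihom_mem_coneIdeal {M N : ℕ} {A : Set (PSp M × PSp N)} {P : BiPoly M N}
    (hP : IsBihomogeneous P) : P ∈ coneIdeal A ↔ A ⊆ biZeroSet P := by
  constructor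
  · intro h p hp
    have := h p hp 1 1 one_ne_zero one_ne_zero
    rwa [one_smul, one_smul] at this
  · intro h p hp l u hl hu
    rw [bihom_scale_ne hP hl hu]
    exact h hp

lemma coneIdeal_zclosure {M N : ℕ} (A : Set (PSp M × PSp N)) :
    coneIdeal (@closure _ (zariskiProd M N) A) = coneIdeal A := by
  refine le_antisymm (coneIdeal_anti (@subset_closure _ (zariskiProd M N) A)) ?_
  intro P hP p hp l u hl hu
  by_contra hne
  obtain ⟨P', hP', h1, h2⟩ := exists_component P _ _ hne
  rw [ne_eq, bihom_scale_ne hP' hl hu] at h1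
  have : ¬ A ⊆ biZeroSet P' := fun hA => h1 ((mem_zclosure_iff A p).1 hp P' hP' hA)
  obtain ⟨q, hq, hq'⟩ := Set.not_subset.1 this
  obtain ⟨l', u', hl', hu', h3⟩ := h2 _ _ hq'
  exact h3 (hP q hq l' u' hl' hu')

lemma coneIdeal_cancel {M N : ℕ} {A : Set (PSp M × PSp N)}
    (h : @IsIrreducible _ (zariskiProd M N) A) {q : BiPoly M N} (hq : IsBihomogeneous q)
    (hqA : ¬ A ⊆ biZeroSet q) (g : BiPoly M N) (hg : q * g ∈ coneIdeal A) : g ∈ coneIdeal A := by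
  intro p hp l u hl hu
  by_contra hne
  obtain ⟨P', hP', h1, h2⟩ := exists_component g _ _ hne
  rw [ne_eq, bihom_scale_ne hP' hl hu] at h1
  obtain ⟨s, hs, hs1, hs2⟩ := exists_of_zirreducible h hq hP' hqA (fun hA => h1 (hA hp))
  obtain ⟨l', u', hl', hu', h3⟩ := h2 _ _ hs2
  have := hg s hs l' u' hl' hu'
  rw [map_mul, mul_eq_zero, bihom_scale_ne hq hl' hu'] at this
  exact this.elim hs1 h3

/-! ### Algebraic independence modulo an ideal -/

lemma eval_aeval' {σ τ : Type*} (s : τ → ℂ) (f : σ → MvPolynomial τ ℂ) (P : MvPolynomial σ ℂ) :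
    eval s (aeval f P) = eval (fun i => eval s (f i)) P := by
  induction P using MvPolynomial.induction_on with
  | C c => simp
  | add p q hp hq => rw [map_add, map_add, map_add, hp, hq]
  | mul_X p i hp => rw [map_mul, map_mul, map_mul, hp, aeval_X, eval_X]

/-- There are `e` elements which are algebraically independent modulo `I`. -/
def AlgInd {A : Type*} [CommRing A] [Algebra ℂ A] (e : ℕ) (I : Ideal A) : Prop :=
  ∃ a : Fin e → A, ∀ F : MvPolynomial (Fin e) ℂ, aeval a F ∈ I → F = 0

lemma AlgInd.anti {A : Type*} [CommRing A] [Algebra ℂ A] {e : ℕ} {I I' : Ideal A}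
    (h : AlgInd e I') (hle : I ≤ I') : AlgInd e I := by
  obtain ⟨a, ha⟩ := h
  exact ⟨a, fun F hF => ha F (hle hF)⟩

lemma AlgInd.step {A : Type*} [CommRing A] [Algebra ℂ A] {e : ℕ} {I I' : Ideal A}
    (h : AlgInd e I') (hle : I ≤ I') (q : A) (hq : q ∈ I') (hc : ∀ g, q * g ∈ I → g ∈ I) :
    AlgInd (e + 1) I := by
  obtain ⟨a, ha⟩ := h
  refine ⟨Fin.cons q a, ?_⟩
  have key : ∀ (k : ℕ) (G : Polynomial (MvPolynomial (Fin e) ℂ)), G.natDegree ≤ k →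
      Polynomial.eval₂ (aeval a : MvPolynomial (Fin e) ℂ →ₐ[ℂ] A).toRingHom q G ∈ I → G = 0 := by
    intro k
    induction k with
    | zero =>
      intro G hG hmem
      rw [Polynomial.eq_C_of_natDegree_le_zero hG] at hmem ⊢
      rw [Polynomial.eval₂_C] at hmem
      rw [ha _ (hle hmem), map_zero]
    | succ k ih =>
      intro G hG hmem
      rw [← Polynomial.X_mul_divX_add G, Polynomial.eval₂_add, Polynomial.eval₂_mul,
        Polynomial.eval₂_X, Polynomial.eval₂_C] at hmem
      have h0 : G.coeff 0 = 0 := by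
        apply ha
        have := I'.sub_mem (hle hmem) (I'.mul_mem_right
          (Polynomial.eval₂ (aeval a : MvPolynomial (Fin e) ℂ →ₐ[ℂ] A).toRingHom q G.divX) hq)
        rwa [add_sub_cancel_left] at this
      rw [h0, map_zero, add_zero] at hmem
      have h1 := ih G.divX (by rw [Polynomial.natDegree_divX_eq_natDegree_tsub_one]; omega)
        (hc _ hmem)
      rw [← Polynomial.X_mul_divX_add G, h0, h1]
      simp
  intro F hF
  have hF' : aeval (Fin.cons q a : Fin (e + 1) → A) F =
      Polynomial.eval₂ (aeval a : MvPolynomial (Fin e) ℂ →ₐ[ℂ] A).toRingHom q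
        (finSuccEquiv ℂ e F) := by
    clear hF
    induction F using MvPolynomial.induction_on with
    | C c => simp [finSuccEquiv_apply]
    | add p q hp hq => rw [map_add, map_add, Polynomial.eval₂_add, hp, hq]
    | mul_X p i hp =>
      rw [map_mul, map_mul, Polynomial.eval₂_mul, hp, aeval_X]
      congr 1
      refine Fin.cases ?_ (fun i => ?_) i
      · simp [finSuccEquiv_X_zero]
      · simp [finSuccEquiv_X_succ]
  rw [hF'] at hF
  have := key _ _ le_rfl hF
  simpa using this

lemma AlgInd.le_card {A : Type*} [CommRing A] [Algebra ℂ A] {e : ℕ} {τ : Type} [Fintype τ]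
    (φ : A →ₐ[ℂ] MvPolynomial τ ℂ) (h : AlgInd e (RingHom.ker φ)) : e ≤ Fintype.card τ := by
  obtain ⟨a, ha⟩ := h
  have hind : AlgebraicIndependent ℂ (fun i => φ (a i)) := by
    rw [algebraicIndependent_iff]
    intro F hF
    apply ha
    rw [RingHom.mem_ker, ← hF]
    exact comp_aeval_apply (R := ℂ) (f := a) φ F
  have := hind.cardinalMk_le_trdeg
  rw [MvPolynomial.trdeg_of_isDomain] at this
  simpa using this

lemma algInd_two {M N : ℕ} {A : Set (PSp M × PSp N)} (hne : A.Nonempty) :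
    AlgInd 2 (coneIdeal A) := by
  obtain ⟨p, hp⟩ := hne
  obtain ⟨i, hi⟩ := Function.ne_iff.1 p.1.rep_nonzero
  obtain ⟨j, hj⟩ := Function.ne_iff.1 p.2.rep_nonzero
  simp only [Pi.zero_apply] at hi hj
  refine ⟨![X (Sum.inl i), X (Sum.inr j)], fun F hF => ?_⟩
  have : F * (X 0 * X 1) = 0 := by
    refine MvPolynomial.funext fun s => ?_
    rw [map_mul, map_mul, eval_X, eval_X, map_zero]
    by_cases h0 : s 0 = 0
    · simp [h0]
    by_cases h1 : s 1 = 0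
    · simp [h1]
    have := hF p hp (s 0 / p.1.rep i) (s 1 / p.2.rep j) (div_ne_zero h0 hi) (div_ne_zero h1 hj)
    have e1 : eval (Sum.elim ((s 0 / p.1.rep i) • p.1.rep) ((s 1 / p.2.rep j) • p.2.rep))
        (aeval ![X (Sum.inl i), X (Sum.inr j)] F) = eval s F := by
      rw [eval_aeval']
      congr 2
      funext t
      fin_cases t
      · simp [hi]
      · simp [hj]
    rw [← e1, this, zero_mul]
  rcases mul_eq_zero.1 this with h | h
  · exact h
  · exact absurd h (mul_ne_zero (X_ne_zero _) (X_ne_zero _))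


/-! ### Dimension bounds -/

lemma zdim_le {M N : ℕ} (Y : Set (PSp M × PSp N)) {τ : Type} [Fintype τ] (e : ℕ)
    (hτ : Fintype.card τ = e + 2)
    (φ : BiPoly M N →ₐ[ℂ] MvPolynomial τ ℂ) (hφ : RingHom.ker φ ≤ coneIdeal Y) :
    @topologicalKrullDim ↥Y (TopologicalSpace.induced Subtype.val (zariskiProd M N)) ≤
      (e : WithBot ℕ∞) := by
  let _ := zariskiProd M N
  change Order.krullDim (TopologicalSpace.IrreducibleCloseds ↥Y) ≤ _
  refine iSup_le fun p => ?_
  have hind : Topology.IsInducing (Subtype.val : Y → PSp M × PSp N) := ⟨rfl⟩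
  have hsm := TopologicalSpace.IrreducibleCloseds.map_strictMono_of_isInducing hind
  let C : Fin (p.length + 1) → TopologicalSpace.IrreducibleCloseds (PSp M × PSp N) :=
    fun i => TopologicalSpace.IrreducibleCloseds.map _ hind.continuous (p i)
  have hC : StrictMono C := hsm.comp p.strictMono
  have key : ∀ (k : ℕ) (hk : k < p.length + 1),
      AlgInd (k + 2) (coneIdeal (C ⟨k, hk⟩ : Set (PSp M × PSp N))) := by
    intro k
    induction k with
    | zero =>
      intro hk
      exact algInd_two (C _).isIrreducible.nonempty
    | succ k ih =>
      intro hk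
      have hk' : k < p.length + 1 := by omega
      have hlt : C ⟨k, hk'⟩ < C ⟨k + 1, hk⟩ := hC (by simp [Fin.lt_def])
      obtain ⟨hsub, hnsub⟩ : (C ⟨k, hk'⟩ : Set (PSp M × PSp N)) ⊆ C ⟨k + 1, hk⟩ ∧
          ¬ (C ⟨k + 1, hk⟩ : Set (PSp M × PSp N)) ⊆ C ⟨k, hk'⟩ := hlt
      obtain ⟨s, hs, hs'⟩ := Set.not_subset.1 hnsub
      rw [← (C ⟨k, hk'⟩).isClosed.closure_eq, mem_zclosure_iff] at hs'
      push Not at hs'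
      obtain ⟨q, hq, hq1, hq2⟩ := hs'
      exact (ih hk').step (coneIdeal_anti hsub) q ((bihom_mem_coneIdeal hq).2 hq1)
        (coneIdeal_cancel (C ⟨k + 1, hk⟩).isIrreducible hq fun h => hq2 (h hs))
  have hlast := key p.length (by omega)
  have hle : RingHom.ker φ ≤ coneIdeal (C ⟨p.length, by omega⟩ : Set (PSp M × PSp N)) := by
    refine hφ.trans ?_
    simp only [C, TopologicalSpace.IrreducibleCloseds.coe_map]
    rw [coneIdeal_zclosure]
    refine coneIdeal_anti ?_
    rintro _ ⟨y, _, rfl⟩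
    exact y.2
  have := (hlast.anti hle).le_card φ
  have : p.length ≤ e := by omega
  exact_mod_cast this

lemma le_topDim {X : Type*} [TopologicalSpace X] (Y : Set X) (e : ℕ) (Z : Fin (e + 1) → Set X)
    (hirr : ∀ i, IsIrreducible (Z i)) (hsub : ∀ i, Z i ⊆ Y)
    (hmono : ∀ i j, i < j → Z i ⊆ closure (Z j)) (hne : ∀ i j, i < j → ¬ Z j ⊆ closure (Z i)) :
    (e : WithBot ℕ∞) ≤ topologicalKrullDim Y := by
  have himg : ∀ i, (Subtype.val '' (Subtype.val ⁻¹' Z i : Set Y)) = Z i := by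
    intro i
    rw [Subtype.image_preimage_coe, Set.inter_eq_right]
    exact hsub i
  have hirr' : ∀ i, IsIrreducible (Subtype.val ⁻¹' Z i : Set Y) := by
    intro i
    constructor
    · obtain ⟨p, hp⟩ := (hirr i).1
      exact ⟨⟨p, hsub i hp⟩, hp⟩
    · rintro u v ⟨u, hu, rfl⟩ ⟨v, hv, rfl⟩ ⟨p, hp, hpu⟩ ⟨q, hq, hqv⟩
      obtain ⟨s, hs, hs1, hs2⟩ := (hirr i).2 u v hu hv ⟨p, hp, hpu⟩ ⟨q, hq, hqv⟩
      exact ⟨⟨s, hsub i hs⟩, hs, hs1, hs2⟩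
  let C : Fin (e + 1) → TopologicalSpace.IrreducibleCloseds Y := fun i =>
    ⟨closure (Subtype.val ⁻¹' Z i), (hirr' i).closure, isClosed_closure⟩
  have hC : StrictMono C := by
    intro i j hij
    rw [← SetLike.coe_ssubset_coe, Set.ssubset_def]
    constructor
    · refine closure_minimal ?_ isClosed_closure
      intro y hy
      change y ∈ closure (Subtype.val ⁻¹' Z j)
      rw [closure_subtype, himg]
      exact hmono i j hij hy
    · intro h
      refine hne i j hij fun y hy => ?_
      have : (⟨y, hsub j hy⟩ : Y) ∈ closure (Subtype.val ⁻¹' Z i : Set Y) :=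
        h (subset_closure hy)
      rwa [closure_subtype, himg] at this
  have := Order.LTSeries.length_le_krullDim (LTSeries.mk e C hC)
  exact this

/-! ### Parametrized sets -/

/-- The set of points `([f s], [g s])`. -/
def paramSet {M N : ℕ} {σ : Type} (f : Fin M → MvPolynomial σ ℂ) (g : Fin N → MvPolynomial σ ℂ) :
    Set (PSp M × PSp N) :=
  {p | ∃ (s : σ → ℂ) (hx : (fun i => eval s (f i)) ≠ 0) (hz : (fun j => eval s (g j)) ≠ 0),
    p = (Projectivization.mk ℂ _ hx, Projectivization.mk ℂ _ hz)}

lemma eval_aeval_elim {M N : ℕ} {σ : Type} (f : Fin M → MvPolynomial σ ℂ)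
    (g : Fin N → MvPolynomial σ ℂ) (s : σ → ℂ) (P : BiPoly M N) :
    eval s (aeval (Sum.elim f g) P) =
      eval (Sum.elim (fun i => eval s (f i)) (fun j => eval s (g j))) P := by
  rw [eval_aeval']
  congr 2
  funext i
  cases i <;> rfl

lemma exists_eval_ne {σ : Type*} {P : MvPolynomial σ ℂ} (h : P ≠ 0) : ∃ s, eval s P ≠ 0 := by
  by_contra! hcon
  exact h (MvPolynomial.funext fun s => by rw [hcon s, map_zero])

lemma paramSet_subset_iff {M N : ℕ} {σ : Type} {f : Fin M → MvPolynomial σ ℂ}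
    {g : Fin N → MvPolynomial σ ℂ} (hf : f ≠ 0) (hg : g ≠ 0) {P : BiPoly M N}
    (hP : IsBihomogeneous P) :
    paramSet f g ⊆ biZeroSet P ↔ aeval (Sum.elim f g) P = 0 := by
  constructor
  · intro h
    by_contra hne
    obtain ⟨i, hi⟩ := Function.ne_iff.1 hf
    obtain ⟨j, hj⟩ := Function.ne_iff.1 hg
    obtain ⟨s, hs⟩ := exists_eval_ne (mul_ne_zero hne (mul_ne_zero hi hj))
    rw [map_mul, map_mul] at hs
    have h1 := left_ne_zero_of_mul hs
    have h2 := left_ne_zero_of_mul (right_ne_zero_of_mul hs)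
    have h3 := right_ne_zero_of_mul (right_ne_zero_of_mul hs)
    have hx : (fun i => eval s (f i)) ≠ 0 := fun h => h2 (congrFun h i)
    have hz : (fun j => eval s (g j)) ≠ 0 := fun h => h3 (congrFun h j)
    have := h ⟨s, hx, hz, rfl⟩
    rw [mk_mem_biZeroSet hP, ← eval_aeval_elim] at this
    exact h1 this
  · rintro h _ ⟨s, hx, hz, rfl⟩
    rw [mk_mem_biZeroSet hP, ← eval_aeval_elim, h, map_zero]

lemma paramSet_nonempty {M N : ℕ} {σ : Type} {f : Fin M → MvPolynomial σ ℂ}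
    {g : Fin N → MvPolynomial σ ℂ} (hf : f ≠ 0) (hg : g ≠ 0) : (paramSet f g).Nonempty := by
  by_contra hne
  have := (paramSet_subset_iff hf hg (bihom_one (M := M) (N := N))).1
    (fun p hp => absurd ⟨p, hp⟩ hne)
  simp at this

lemma paramSet_irreducible {M N : ℕ} {σ : Type} {f : Fin M → MvPolynomial σ ℂ}
    {g : Fin N → MvPolynomial σ ℂ} (hf : f ≠ 0) (hg : g ≠ 0) :
    @IsIrreducible _ (zariskiProd M N) (paramSet f g) := by
  refine zirreducible_of (paramSet_nonempty hf hg) fun P Q hP hQ h => ?_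
  rw [paramSet_subset_iff hf hg (bihom_mul hP hQ), map_mul, mul_eq_zero] at h
  rwa [paramSet_subset_iff hf hg hP, paramSet_subset_iff hf hg hQ]

lemma paramSet_subset_closure {M N : ℕ} {σ τ : Type} {f : Fin M → MvPolynomial σ ℂ}
    {g : Fin N → MvPolynomial σ ℂ} {f' : Fin M → MvPolynomial τ ℂ}
    {g' : Fin N → MvPolynomial τ ℂ} (hf : f ≠ 0) (hg : g ≠ 0) (hf' : f' ≠ 0) (hg' : g' ≠ 0)
    (κ : MvPolynomial τ ℂ →ₐ[ℂ] MvPolynomial σ ℂ) (h1 : ∀ i, κ (f' i) = f i)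
    (h2 : ∀ j, κ (g' j) = g j) :
    paramSet f g ⊆ @closure _ (zariskiProd M N) (paramSet f' g') := by
  intro p hp
  rw [mem_zclosure_iff]
  intro P hP h
  rw [paramSet_subset_iff hf' hg' hP] at h
  refine (paramSet_subset_iff hf hg hP).2 ?_ hp
  have e : aeval (Sum.elim f g) P = κ (aeval (Sum.elim f' g') P) := by
    rw [comp_aeval_apply (f := Sum.elim f' g') κ P]
    congr 2
    funext i
    cases i <;> simp [h1, h2]
  rw [e, h, map_zero]

lemma bihom_inl {M N : ℕ} (c c' : ℂ) (i i' : Fin M) :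
    IsBihomogeneous (C c * X (Sum.inl i) - C c' * X (Sum.inl i') : BiPoly M N) := by
  refine ⟨1, 0, ?_, ?_⟩
  · exact ((isWeightedHomogeneous_X ℂ _ (Sum.inl i)).C_mul c).sub
      ((isWeightedHomogeneous_X ℂ _ (Sum.inl i')).C_mul c')
  · exact ((isWeightedHomogeneous_X ℂ _ (Sum.inl i)).C_mul c).sub
      ((isWeightedHomogeneous_X ℂ _ (Sum.inl i')).C_mul c')

lemma bihom_inr {M N : ℕ} (j : Fin N) : IsBihomogeneous (X (Sum.inr j) : BiPoly M N) :=
  ⟨0, 1, isWeightedHomogeneous_X ℂ _ (Sum.inr j), isWeightedHomogeneous_X ℂ _ (Sum.inr j)⟩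


/-! ### Linear algebra -/

lemma exists_rank_factor {K : Type*} [Field K] {a b r : ℕ} (A : Matrix (Fin a) (Fin b) K)
    (hA : A.rank = r) :
    ∃ (L : Matrix (Fin r) (Fin a) K) (C : Matrix (Fin b) (Fin r) K), L * A * C = 1 := by
  classical
  let T := A.mulVecLin
  have hfr : Module.finrank K (LinearMap.range T) = Module.finrank K (Fin r → K) := by
    rw [Module.finrank_fin_fun]
    exact hA
  let g : LinearMap.range T ≃ₗ[K] (Fin r → K) := LinearEquiv.ofFinrankEq _ _ hfr
  obtain ⟨s, hs⟩ := LinearMap.exists_rightInverse_of_surjective T.rangeRestrict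
    (LinearMap.range_rangeRestrict T)
  obtain ⟨q, hq⟩ := LinearMap.exists_leftInverse_of_injective (LinearMap.range T).subtype
    (Submodule.ker_subtype _)
  refine ⟨LinearMap.toMatrix' (g.toLinearMap ∘ₗ q), LinearMap.toMatrix' (s ∘ₗ g.symm.toLinearMap),
    ?_⟩
  have hAT : A = LinearMap.toMatrix' T := by
    simp [T, ← Matrix.toLin'_apply']
  conv_lhs => rw [hAT]
  rw [← LinearMap.toMatrix'_comp, ← LinearMap.toMatrix'_comp, ← LinearMap.toMatrix'_id]
  congr 1
  refine LinearMap.ext fun y => ?_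
  have h1 : T (s (g.symm y)) = (g.symm y : LinearMap.range T) := by
    have := LinearMap.congr_fun hs (g.symm y)
    exact congrArg Subtype.val this
  have h2 : q ((g.symm y : LinearMap.range T) : Fin a → K) = g.symm y :=
    LinearMap.congr_fun hq (g.symm y)
  simp [h1, h2]

lemma le_rank_of_det {K : Type*} [Field K] {a b r : ℕ} (A : Matrix (Fin a) (Fin b) K)
    (L : Matrix (Fin r) (Fin a) K) (C : Matrix (Fin b) (Fin r) K) (h : (L * A * C).det ≠ 0) :
    r ≤ (L * A).rank ∧ r ≤ A.rank := by
  have h1 : (L * A * C).rank = r := by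
    rw [Matrix.rank_of_isUnit]
    · simp
    · rw [Matrix.isUnit_iff_isUnit_det]
      exact h.isUnit
  have h2 := Matrix.rank_mul_le_left (L * A) C
  have h3 := Matrix.rank_mul_le_right L A
  omega

/-- Coordinates giving an isomorphism of a subspace with a coordinate space. -/
lemma exists_coords {K : Type*} [Field K] {b k : ℕ} (V : Submodule K (Fin b → K))
    (hV : Module.finrank K V = k) :
    ∃ (e : Fin k → Fin b) (v : Fin k → Fin b → K), (∀ l, v l ∈ V) ∧
      (∀ l l', v l (e l') = if l = l' then 1 else 0) ∧
      ∀ w ∈ V, w = ∑ l, w (e l) • v l := by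
  classical
  let c : Fin b → Module.Dual K V := fun j => (LinearMap.proj j) ∘ₗ V.subtype
  have hspan : Submodule.span K (Set.range c) = ⊤ := by
    rw [eq_top_iff]
    rintro f -
    obtain ⟨F, hF⟩ := LinearMap.exists_extend f
    have : f = ∑ j, F (Pi.single j 1) • c j := by
      rw [← hF]
      refine LinearMap.ext fun y => ?_
      have hy : (y : Fin b → K) = ∑ j, (y : Fin b → K) j • Pi.single j (1 : K) := by
        funext i
        simp [Finset.sum_apply, Pi.single_apply]
      simp only [LinearMap.comp_apply, Submodule.subtype_apply]
      conv_lhs => rw [hy]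
      simp [c, mul_comm]
    rw [this]
    exact Submodule.sum_mem _ fun j _ => Submodule.smul_mem _ _ (Submodule.subset_span ⟨j, rfl⟩)
  obtain ⟨κ, a, ha, hsp, hli⟩ := exists_linearIndependent' K c
  have : Finite κ := Finite.of_injective a ha
  have : Fintype κ := Fintype.ofFinite κ
  rw [hspan] at hsp
  let bs := Module.Basis.mk hli hsp.ge
  have hcard : Fintype.card κ = k := by
    rw [← Module.finrank_eq_card_basis bs, Subspace.dual_finrank_eq, hV]
  let ee : Fin k ≃ κ := (Fintype.equivFinOfCardEq hcard).symm
  let T : V →ₗ[K] (Fin k → K) := LinearMap.pi fun l => c (a (ee l))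
  have hinj : Function.Injective T := by
    rw [← LinearMap.ker_eq_bot, eq_bot_iff]
    intro y hy
    rw [Submodule.mem_bot, ← Module.forall_dual_apply_eq_zero_iff K y]
    intro f
    have hf : f ∈ Submodule.span K (Set.range (c ∘ a)) := by rw [hsp]; trivial
    induction hf using Submodule.span_induction with
    | mem x hx =>
      obtain ⟨i, rfl⟩ := hx
      have := congrFun (LinearMap.mem_ker.1 hy) (ee.symm i)
      simpa [T] using this
    | zero => rfl
    | add f g _ _ hf hg => rw [LinearMap.add_apply, hf, hg, add_zero]
    | smul t f _ hf => rw [LinearMap.smul_apply, hf, smul_zero]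
  have hsurj : Function.Surjective T :=
    (LinearMap.injective_iff_surjective_of_finrank_eq_finrank (by simp [hV])).1 hinj
  choose v hv using fun l : Fin k => hsurj (Pi.single l 1)
  have hv' : ∀ l l', (v l : Fin b → K) (a (ee l')) = if l = l' then 1 else 0 := by
    intro l l'
    have := congrFun (hv l) l'
    simp only [T, LinearMap.pi_apply, c, LinearMap.comp_apply, Submodule.subtype_apply,
      LinearMap.proj_apply, Pi.single_apply] at this
    rw [this]
    simp [eq_comm]
  refine ⟨fun l => a (ee l), fun l => v l, fun l => (v l).2, hv', fun w hw => ?_⟩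
  have : (⟨w, hw⟩ : V) = ∑ l, w (a (ee l)) • v l := by
    apply hinj
    funext l'
    simp only [T, LinearMap.pi_apply, c, LinearMap.comp_apply, Submodule.subtype_apply,
      LinearMap.proj_apply, Submodule.coe_sum, Submodule.coe_smul, Finset.sum_apply, Pi.smul_apply,
      hv']
    simp
  have := congrArg Subtype.val this
  simpa using this

/-- A basis of the kernel of a polynomial matrix in echelon form, with denominators cleared. -/
lemma exists_kernel {R : Type*} [CommRing R] [IsDomain R] {a b r k : ℕ}
    (J : Matrix (Fin a) (Fin b) R)
    (hr : r = (J.map (algebraMap R (FractionRing R))).rank) (hk : r + k = b) :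
    ∃ (D : R) (e : Fin k → Fin b) (v : Fin k → Fin b → R), D ≠ 0 ∧
      (∀ l, J.mulVec (v l) = 0) ∧
      (∀ l l', v l (e l') = if l = l' then D else 0) ∧
      ∀ w, J.mulVec w = 0 → D • w = ∑ l, w (e l) • v l := by
  classical
  set K := FractionRing R
  set JK := J.map (algebraMap R K) with hJK
  have hinjR : Function.Injective (algebraMap R K) := IsFractionRing.injective R K
  have hfin : Module.finrank K (LinearMap.ker JK.mulVecLin) = k := by
    have := LinearMap.finrank_range_add_finrank_ker JK.mulVecLin
    rw [Module.finrank_fin_fun] at this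
    have h2 : r = Module.finrank K (LinearMap.range JK.mulVecLin) := hr
    omega
  obtain ⟨e, v, hvV, hve, hvw⟩ := exists_coords _ hfin
  obtain ⟨D, hD⟩ := IsLocalization.exist_integer_multiples_of_finite (nonZeroDivisors R)
    (fun p : Fin k × Fin b => v p.1 p.2)
  choose u hu using hD
  have hmap : ∀ w : Fin b → R, (fun i => algebraMap R K (J.mulVec w i)) =
      JK.mulVec (fun j => algebraMap R K (w j)) := by
    intro w
    funext i
    simp [Matrix.mulVec, dotProduct, hJK, Matrix.map_apply]
  have hu' : ∀ l j, algebraMap R K (u (l, j)) = algebraMap R K D * v l j := by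
    intro l j
    rw [hu (l, j), Algebra.smul_def]
  refine ⟨D, e, fun l j => u (l, j), nonZeroDivisors.ne_zero D.2, ?_, ?_, ?_⟩
  · intro l
    funext i
    apply hinjR
    have h1 := congrFun (hmap fun j => u (l, j)) i
    rw [h1]
    have h2 : (fun j => algebraMap R K (u (l, j))) = algebraMap R K D • v l := by
      funext j
      rw [hu']
      rfl
    rw [h2, Matrix.mulVec_smul]
    have h3 : JK.mulVec (v l) = 0 := hvV l
    simp [h3]
  · intro l l'
    apply hinjR
    rw [hu', hve]
    split_ifs <;> simp
  · intro w hw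
    have h1 : (fun j => algebraMap R K (w j)) ∈ LinearMap.ker JK.mulVecLin := by
      rw [LinearMap.mem_ker, Matrix.mulVecLin_apply, ← hmap, hw]
      funext i
      simp
    have h2 := hvw _ h1
    funext j
    apply hinjR
    have h3 := congrFun h2 j
    simp only [Finset.sum_apply, Pi.smul_apply, smul_eq_mul] at h3 ⊢
    rw [map_mul, map_sum, h3, Finset.mul_sum]
    refine Finset.sum_congr rfl fun l _ => ?_
    rw [map_mul, hu']
    ring

/-- If `L J` has full generic rank then its kernel is the kernel of `J`. -/
lemma mulVec_eq_zero_of {R : Type*} [CommRing R] [IsDomain R] {a b r : ℕ}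
    (J : Matrix (Fin a) (Fin b) R)
    (hr : r = (J.map (algebraMap R (FractionRing R))).rank)
    (L : Matrix (Fin r) (Fin a) R) (C : Matrix (Fin b) (Fin r) R) (hdet : (L * J * C).det ≠ 0)
    (w : Fin b → R) (hw : (L * J).mulVec w = 0) : J.mulVec w = 0 := by
  classical
  set K := FractionRing R
  set ι := algebraMap R K
  have hinjR : Function.Injective ι := IsFractionRing.injective R K
  have hle : r ≤ (L.map ι * J.map ι).rank := by
    refine (le_rank_of_det (J.map ι) (L.map ι) (C.map ι) ?_).1
    rw [← Matrix.map_mul, ← Matrix.map_mul]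
    have := RingHom.map_det ι (L * J * C)
    rw [RingHom.mapMatrix_apply] at this
    rw [← this]
    exact fun h => hdet (hinjR (by rw [h, map_zero]))
  have hker : LinearMap.ker (J.map ι).mulVecLin = LinearMap.ker (L.map ι * J.map ι).mulVecLin := by
    apply Submodule.eq_of_le_of_finrank_le
    · intro y hy
      rw [LinearMap.mem_ker, Matrix.mulVecLin_apply] at hy ⊢
      rw [← Matrix.mulVec_mulVec, hy, Matrix.mulVec_zero]
    · have h1 := LinearMap.finrank_range_add_finrank_ker (J.map ι).mulVecLin
      have h2 := LinearMap.finrank_range_add_finrank_ker (L.map ι * J.map ι).mulVecLin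
      have h3 : r = Module.finrank K (LinearMap.range (J.map ι).mulVecLin) := hr
      have h4 : r ≤ Module.finrank K (LinearMap.range (L.map ι * J.map ι).mulVecLin) := hle
      omega
  have hmem : (fun j => ι (w j)) ∈ LinearMap.ker (L.map ι * J.map ι).mulVecLin := by
    rw [LinearMap.mem_ker, Matrix.mulVecLin_apply, ← Matrix.map_mul]
    funext i
    have := RingHom.map_mulVec ι (L * J) w i
    rw [hw] at this
    simpa [Function.comp_def] using this.symm
  rw [← hker, LinearMap.mem_ker, Matrix.mulVecLin_apply] at hmem
  funext i
  apply hinjR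
  rw [RingHom.map_mulVec]
  simpa [Function.comp_def] using congrFun hmem i


/-! ### Polynomial matrices -/

lemma mveval_det {M a : ℕ} (x : Fin M → ℂ) (A : Matrix (Fin a) (Fin a) (MvPolynomial (Fin M) ℂ)) :
    eval x A.det = (A.map (eval x)).det := by
  have := RingHom.map_det (eval x) A
  rwa [RingHom.mapMatrix_apply] at this

lemma map_C_eval {M a b : ℕ} (x : Fin M → ℂ) (A : Matrix (Fin a) (Fin b) ℂ) :
    (A.map (C : ℂ →+* MvPolynomial (Fin M) ℂ)).map (eval x) = A := by
  ext i j
  simp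

lemma rank_eval_le {M a b r : ℕ} (J : Matrix (Fin a) (Fin b) (MvPolynomial (Fin M) ℂ))
    (hr : r = (J.map (algebraMap _ (FractionRing (MvPolynomial (Fin M) ℂ)))).rank)
    (x : Fin M → ℂ) : (J.map (eval x)).rank ≤ r := by
  obtain ⟨L, C', hLC⟩ := exists_rank_factor (J.map (eval x)) rfl
  set ι := algebraMap (MvPolynomial (Fin M) ℂ) (FractionRing (MvPolynomial (Fin M) ℂ))
  have hinjR : Function.Injective ι := IsFractionRing.injective _ _
  have hdet : (L.map (C : ℂ →+* MvPolynomial (Fin M) ℂ) * J *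
      C'.map (C : ℂ →+* MvPolynomial (Fin M) ℂ)).det ≠ 0 := by
    intro h
    have := congrArg (eval x) h
    rw [mveval_det, Matrix.map_mul, Matrix.map_mul, map_C_eval, map_C_eval, hLC] at this
    simp at this
  rw [hr]
  refine (le_rank_of_det (J.map ι) ((L.map (C : ℂ →+* MvPolynomial (Fin M) ℂ)).map ι)
    ((C'.map (C : ℂ →+* MvPolynomial (Fin M) ℂ)).map ι) ?_).2
  rw [← Matrix.map_mul, ← Matrix.map_mul]
  have h2 := RingHom.map_det ι (L.map (C : ℂ →+* MvPolynomial (Fin M) ℂ) * J *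
      C'.map (C : ℂ →+* MvPolynomial (Fin M) ℂ))
  rw [RingHom.mapMatrix_apply] at h2
  rw [← h2]
  exact fun h => hdet (hinjR (by rw [h, map_zero]))

lemma clear_matrix {R : Type*} [CommRing R] [IsDomain R] {a b : ℕ}
    (A : Matrix (Fin a) (Fin b) (FractionRing R)) :
    ∃ (D : R) (B : Matrix (Fin a) (Fin b) R), D ≠ 0 ∧
      B.map (algebraMap R (FractionRing R)) = algebraMap R (FractionRing R) D • A := by
  obtain ⟨D, hD⟩ := IsLocalization.exist_integer_multiples_of_finite (nonZeroDivisors R)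
    (fun p : Fin a × Fin b => A p.1 p.2)
  choose u hu using hD
  refine ⟨D, fun i j => u (i, j), nonZeroDivisors.ne_zero D.2, ?_⟩
  ext i j
  have := hu (i, j)
  rw [Algebra.smul_def] at this
  exact this

lemma exists_generic_rank {M a b r : ℕ} (J : Matrix (Fin a) (Fin b) (MvPolynomial (Fin M) ℂ))
    (hr : r = (J.map (algebraMap _ (FractionRing (MvPolynomial (Fin M) ℂ)))).rank) :
    ∃ E : MvPolynomial (Fin M) ℂ, E ≠ 0 ∧ ∀ x, eval x E ≠ 0 → (J.map (eval x)).rank = r := by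
  set ι := algebraMap (MvPolynomial (Fin M) ℂ) (FractionRing (MvPolynomial (Fin M) ℂ))
  have hinjR : Function.Injective ι := IsFractionRing.injective _ _
  obtain ⟨L, C', hLC⟩ := exists_rank_factor (J.map ι) hr.symm
  obtain ⟨D, L', hD, hL'⟩ := clear_matrix L
  obtain ⟨D', C'', hD', hC''⟩ := clear_matrix C'
  refine ⟨(L' * J * C'').det, ?_, ?_⟩
  · intro h
    have h2 := RingHom.map_det ι (L' * J * C'')
    rw [RingHom.mapMatrix_apply, h, map_zero, Matrix.map_mul, Matrix.map_mul, hL', hC'',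
      Matrix.smul_mul, Matrix.smul_mul, Matrix.mul_smul, hLC, Matrix.det_smul, Matrix.det_smul,
      Matrix.det_one] at h2
    have n1 : ι D ≠ 0 := fun h => hD (hinjR (by rw [h, map_zero]))
    have n2 : ι D' ≠ 0 := fun h => hD' (hinjR (by rw [h, map_zero]))
    exact (mul_ne_zero (pow_ne_zero _ n1) (mul_ne_zero (pow_ne_zero _ n2) one_ne_zero)) h2.symm
  · intro x hx
    refine le_antisymm (rank_eval_le J hr x) ?_
    rw [mveval_det, Matrix.map_mul, Matrix.map_mul] at hx
    exact (le_rank_of_det _ _ _ hx).2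

/-- A kernel vector at a point of maximal rank extends to a polynomial section of the kernel. -/
lemma exists_section {M a b r : ℕ} (J : Matrix (Fin a) (Fin b) (MvPolynomial (Fin M) ℂ))
    (hr : r = (J.map (algebraMap _ (FractionRing (MvPolynomial (Fin M) ℂ)))).rank)
    (x : Fin M → ℂ) (hx : (J.map (eval x)).rank = r) (z : Fin b → ℂ)
    (hz : (J.map (eval x)).mulVec z = 0) :
    ∃ w : Fin b → MvPolynomial (Fin M) ℂ, J.mulVec w = 0 ∧ ∀ j, eval x (w j) = z j := by
  obtain ⟨L, C', hLC⟩ := exists_rank_factor (J.map (eval x)) hx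
  set L' := L.map (C : ℂ →+* MvPolynomial (Fin M) ℂ) with hL'
  set C'' := C'.map (C : ℂ →+* MvPolynomial (Fin M) ℂ) with hC''
  set z' : Fin b → MvPolynomial (Fin M) ℂ := fun j => C (z j) with hz'
  have hev : eval x (L' * J * C'').det = 1 := by
    rw [mveval_det, Matrix.map_mul, Matrix.map_mul, map_C_eval, map_C_eval, hLC, Matrix.det_one]
  have hdet : (L' * J * C'').det ≠ 0 := by
    intro h
    rw [h, map_zero] at hev
    exact zero_ne_one hev
  have hJz : (fun i => eval x (J.mulVec z' i)) = 0 := by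
    rw [← hz]
    funext i
    rw [RingHom.map_mulVec]
    congr 1
    funext j
    simp [hz']
  refine ⟨(L' * J * C'').det • z' -
    (C'' * (L' * J * C'').adjugate * L').mulVec (J.mulVec z'), ?_, ?_⟩
  · apply mulVec_eq_zero_of J hr L' C'' hdet
    rw [Matrix.mulVec_sub, Matrix.mulVec_smul, Matrix.mulVec_mulVec, Matrix.mulVec_mulVec]
    have : L' * J * (C'' * (L' * J * C'').adjugate * L') * J =
        (L' * J * C'').det • (L' * J) := by
      calc _ = (L' * J * C'') * (L' * J * C'').adjugate * (L' * J) := by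
            simp only [Matrix.mul_assoc]
        _ = _ := by rw [Matrix.mul_adjugate, Matrix.smul_mul, Matrix.one_mul]
    rw [this, Matrix.smul_mulVec, sub_self]
  · intro j
    rw [Pi.sub_apply, map_sub, RingHom.map_mulVec]
    have : (eval x) ∘ (J.mulVec z') = 0 := hJz
    rw [this, Matrix.mulVec_zero]
    simp only [hz', Pi.smul_apply, smul_eq_mul, map_mul, eval_C, hev, one_mul, Pi.zero_apply,
      sub_zero]

/-- The parametrization of the kernel bundle. -/
def kerParam {M N k : ℕ} (v : Fin k → Fin N → MvPolynomial (Fin M) ℂ) (j : Fin N) :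
    MvPolynomial (Fin M ⊕ Fin k) ℂ :=
  ∑ l, X (Sum.inr l) * rename Sum.inl (v l j)

/-- The comorphism of the parametrization of the kernel bundle. -/
def kerHom {M N k : ℕ} (v : Fin k → Fin N → MvPolynomial (Fin M) ℂ) :
    BiPoly M N →ₐ[ℂ] MvPolynomial (Fin M ⊕ Fin k) ℂ :=
  aeval (Sum.elim (fun i => X (Sum.inl i)) (kerParam v))

lemma kerHom_vanish {M N a k r : ℕ} (J : Matrix (Fin a) (Fin N) (MvPolynomial (Fin M) ℂ))
    (hr : r = (J.map (algebraMap _ (FractionRing (MvPolynomial (Fin M) ℂ)))).rank)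
    (D : MvPolynomial (Fin M) ℂ) (e : Fin k → Fin N) (v : Fin k → Fin N → MvPolynomial (Fin M) ℂ)
    (hD : D ≠ 0) (hw : ∀ w, J.mulVec w = 0 → D • w = ∑ l, w (e l) • v l)
    (P : BiPoly M N) (hP : kerHom v P = 0)
    (x : Fin M → ℂ) (hx : (J.map (eval x)).rank = r) (z : Fin N → ℂ)
    (hz : (J.map (eval x)).mulVec z = 0) : eval (Sum.elim x z) P = 0 := by
  obtain ⟨w, hw0, hwz⟩ := exists_section J hr x hx z hz
  set K := FractionRing (MvPolynomial (Fin M) ℂ)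
  let ι : MvPolynomial (Fin M) ℂ →ₐ[ℂ] K := IsScalarTower.toAlgHom ℂ _ K
  have hinj : Function.Injective ι := IsFractionRing.injective (MvPolynomial (Fin M) ℂ) K
  have hιD : ι D ≠ 0 := fun h => hD (hinj (by rw [h, map_zero]))
  let ψ : MvPolynomial (Fin M ⊕ Fin k) ℂ →ₐ[ℂ] K :=
    aeval (Sum.elim (fun i => ι (X i)) (fun l => ι (w (e l)) / ι D))
  have hψ : ∀ q : MvPolynomial (Fin M) ℂ, ψ (rename Sum.inl q) = ι q := by
    intro q
    rw [aeval_rename]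
    have : (aeval (fun i => ι (X i)) : MvPolynomial (Fin M) ℂ →ₐ[ℂ] K) = ι := by
      apply MvPolynomial.algHom_ext
      simp
    exact DFunLike.congr_fun this q
  have hcomp : ψ (kerHom v P) = ι (aeval (Sum.elim X w) P) := by
    rw [kerHom, comp_aeval_apply, comp_aeval_apply]
    congr 2
    funext i
    cases i with
    | inl i => simp [ψ]
    | inr j =>
      simp only [Sum.elim_inr, kerParam, map_sum, map_mul, hψ]
      have h1 := congrFun (hw w hw0) j
      simp only [Pi.smul_apply, Finset.sum_apply, smul_eq_mul] at h1
      have h2 := congrArg ι h1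
      rw [map_mul, map_sum] at h2
      rw [← mul_right_inj' hιD, h2, Finset.mul_sum]
      refine Finset.sum_congr rfl fun l _ => ?_
      rw [map_mul]
      simp only [ψ, aeval_X, Sum.elim_inr]
      rw [← mul_assoc, mul_div_cancel₀ _ hιD]
  rw [hP, map_zero] at hcomp
  have h0 : aeval (Sum.elim X w) P = 0 := hinj (by rw [← hcomp, map_zero])
  have := eval_aeval_elim X w x P
  rw [h0, map_zero] at this
  rw [this]
  congr 2
  funext i
  cases i <;> simp [hwz]

lemma eval_homog_smul {M e : ℕ} {P : MvPolynomial (Fin M) ℂ} (hP : P.IsHomogeneous e) (l : ℂ)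
    (x : Fin M → ℂ) : eval (l • x) P = l ^ e * eval x P := by
  rw [← weighted_eval_scale hP l x]
  congr 2
  funext i
  simp

lemma map_eval_smul {M a b e : ℕ} {J : Matrix (Fin a) (Fin b) (MvPolynomial (Fin M) ℂ)}
    (hJ : ∀ i j, (J i j).IsHomogeneous e) (l : ℂ) (x : Fin M → ℂ) :
    J.map (eval (l • x)) = l ^ e • J.map (eval x) := by
  ext i j
  simp [eval_homog_smul (hJ i j)]

lemma rank_smul_ne {a b : ℕ} (A : Matrix (Fin a) (Fin b) ℂ) {c : ℂ} (hc : c ≠ 0) :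
    (c • A).rank = A.rank := by
  have h : ∀ (A : Matrix (Fin a) (Fin b) ℂ) (c : ℂ), (c • A).rank ≤ A.rank := by
    intro A c
    have : c • A = A * (c • (1 : Matrix (Fin b) (Fin b) ℂ)) := by simp
    rw [this]
    exact Matrix.rank_mul_le_left _ _
  refine le_antisymm (h A c) ?_
  have := h (c • A) c⁻¹
  rwa [smul_smul, inv_mul_cancel₀ hc, one_smul] at this


/-! ### The kernel bundle over the generic rank locus -/

lemma kerParam_eval {M N k : ℕ} (v : Fin k → Fin N → MvPolynomial (Fin M) ℂ) (j : Fin N)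
    (s : Fin M ⊕ Fin k → ℂ) :
    eval s (kerParam v j) = ∑ l, s (Sum.inr l) * eval (fun i => s (Sum.inl i)) (v l j) := by
  rw [kerParam, map_sum]
  refine Finset.sum_congr rfl fun l _ => ?_
  rw [map_mul, eval_X, eval_rename]
  rfl

lemma ker_le_cone {M N a k r q : ℕ} (J : Matrix (Fin a) (Fin N) (MvPolynomial (Fin M) ℂ))
    (hr : r = (J.map (algebraMap _ (FractionRing (MvPolynomial (Fin M) ℂ)))).rank)
    (hJ : ∀ i j, (J i j).IsHomogeneous q)
    (D : MvPolynomial (Fin M) ℂ) (e : Fin k → Fin N) (v : Fin k → Fin N → MvPolynomial (Fin M) ℂ)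
    (hD : D ≠ 0) (hw : ∀ w, J.mulVec w = 0 → D • w = ∑ l, w (e l) • v l)
    (W : Set (PSp M × PSp N))
    (hW : W = {p | (J.map (eval p.1.rep)).mulVec p.2.rep = 0 ∧ (J.map (eval p.1.rep)).rank = r}) :
    RingHom.ker (kerHom v) ≤ coneIdeal W := by
  intro P hP p hp l u hl hu
  rw [hW] at hp
  refine kerHom_vanish J hr D e v hD hw P hP _ ?_ _ ?_
  · rw [map_eval_smul hJ, rank_smul_ne _ (pow_ne_zero _ hl)]
    exact hp.2
  · rw [map_eval_smul hJ, Matrix.mulVec_smul, Matrix.smul_mulVec, hp.1, smul_zero, smul_zero]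

lemma subset_iff_kerHom {M N a k r q : ℕ}
    (J : Matrix (Fin a) (Fin N) (MvPolynomial (Fin (M + 1)) ℂ))
    (hr : r = (J.map (algebraMap _ (FractionRing (MvPolynomial (Fin (M + 1)) ℂ)))).rank)
    (hJ : ∀ i j, (J i j).IsHomogeneous q)
    (D : MvPolynomial (Fin (M + 1)) ℂ) (e : Fin (k + 1) → Fin N)
    (v : Fin (k + 1) → Fin N → MvPolynomial (Fin (M + 1)) ℂ)
    (hD : D ≠ 0) (hv : ∀ l, J.mulVec (v l) = 0)
    (hve : ∀ l l', v l (e l') = if l = l' then D else 0)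
    (hw : ∀ w, J.mulVec w = 0 → D • w = ∑ l, w (e l) • v l)
    (W : Set (PSp (M + 1) × PSp N))
    (hW : W = {p | (J.map (eval p.1.rep)).mulVec p.2.rep = 0 ∧ (J.map (eval p.1.rep)).rank = r})
    {P : BiPoly (M + 1) N} (hP : IsBihomogeneous P) :
    W ⊆ biZeroSet P ↔ kerHom v P = 0 := by
  constructor
  · intro h
    by_contra hne
    obtain ⟨E, hE, hEr⟩ := exists_generic_rank J hr
    have hinj : Function.Injective
        (rename Sum.inl : MvPolynomial (Fin (M + 1)) ℂ → MvPolynomial (Fin (M + 1) ⊕ Fin (k + 1)) ℂ) :=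
      rename_injective _ Sum.inl_injective
    have hE' : rename Sum.inl E ≠ (0 : MvPolynomial (Fin (M + 1) ⊕ Fin (k + 1)) ℂ) :=
      fun h => hE (hinj (by rw [h, map_zero]))
    have hD' : rename Sum.inl D ≠ (0 : MvPolynomial (Fin (M + 1) ⊕ Fin (k + 1)) ℂ) :=
      fun h => hD (hinj (by rw [h, map_zero]))
    obtain ⟨s, hs⟩ := exists_eval_ne (mul_ne_zero (mul_ne_zero (mul_ne_zero hne hE') hD')
      (mul_ne_zero (X_ne_zero (R := ℂ) (Sum.inl 0 : Fin (M + 1) ⊕ Fin (k + 1)))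
        (X_ne_zero (R := ℂ) (Sum.inr 0 : Fin (M + 1) ⊕ Fin (k + 1)))))
    simp only [map_mul, eval_X, eval_rename, ne_eq, mul_eq_zero, not_or] at hs
    obtain ⟨⟨⟨h1, h2⟩, h3⟩, h4, h5⟩ := hs
    set x : Fin (M + 1) → ℂ := s ∘ Sum.inl with hx
    set z : Fin N → ℂ := fun j => eval s (kerParam v j) with hz
    have hx0 : x ≠ 0 := fun h => h4 (congrFun h 0)
    have hz0 : z ≠ 0 := by
      intro h
      have := congrFun h (e 0)
      rw [hz] at this
      simp only [kerParam_eval, hve, Pi.zero_apply] at this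
      rw [Finset.sum_eq_single 0 (by intro b _ hb; simp [hb]) (by simp)] at this
      simp only [if_true] at this
      exact (mul_ne_zero h5 h3) this
    have hJz : (J.map (eval x)).mulVec z = 0 := by
      have : z = ∑ l, s (Sum.inr l) • (fun j => eval x (v l j)) := by
        funext j
        rw [hz]
        simp only [kerParam_eval, Finset.sum_apply, Pi.smul_apply, smul_eq_mul]
        rfl
      rw [this, Matrix.mulVec_sum]
      refine Finset.sum_eq_zero fun l _ => ?_
      rw [Matrix.mulVec_smul]
      have h6 : (J.map (eval x)).mulVec (fun j => eval x (v l j)) = 0 := by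
        funext i
        have := RingHom.map_mulVec (eval x) J (v l) i
        rw [hv l] at this
        rw [Pi.zero_apply, map_zero] at this
        exact this.symm
      rw [h6, smul_zero]
    obtain ⟨α, hα⟩ := Projectivization.exists_smul_eq_mk_rep ℂ x hx0
    obtain ⟨β, hβ⟩ := Projectivization.exists_smul_eq_mk_rep ℂ z hz0
    have hmem : ((Projectivization.mk ℂ x hx0, Projectivization.mk ℂ z hz0) :
        PSp (M + 1) × PSp N) ∈ W := by
      rw [hW]
      refine ⟨?_, ?_⟩
      · simp only
        rw [← hα, ← hβ, Units.smul_def, Units.smul_def, map_eval_smul hJ, Matrix.mulVec_smul,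
          Matrix.smul_mulVec, hJz, smul_zero, smul_zero]
      · simp only
        rw [← hα, Units.smul_def, map_eval_smul hJ, rank_smul_ne _ (pow_ne_zero _ α.ne_zero)]
        exact hEr _ h2
    have := (mk_mem_biZeroSet hP hx0 hz0).1 (h hmem)
    rw [kerHom, eval_aeval_elim] at h1
    apply h1
    rw [← this]
    congr 2
    funext i
    cases i <;> simp [hx, hz]
  · intro h
    rw [← bihom_mem_coneIdeal hP]
    exact ker_le_cone J hr hJ D e v hD hw W hW h

lemma kerParam_ne {M N k : ℕ} {D : MvPolynomial (Fin M) ℂ} (hD : D ≠ 0) {e : Fin (k + 1) → Fin N}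
    {v : Fin (k + 1) → Fin N → MvPolynomial (Fin M) ℂ}
    (hve : ∀ l l', v l (e l') = if l = l' then D else 0) : kerParam v ≠ 0 := by
  intro h
  obtain ⟨x, hx⟩ := exists_eval_ne hD
  have := congrArg (eval (Sum.elim x (fun _ => 1))) (congrFun h (e 0))
  rw [kerParam_eval] at this
  simp only [hve] at this
  rw [Finset.sum_eq_single 0 (by intro b _ hb; simp [hb]) (by simp)] at this
  simp at this
  exact hx this

lemma X_inl_ne {M k : ℕ} :
    (fun i => X (Sum.inl i) : Fin (M + 1) → MvPolynomial (Fin (M + 1) ⊕ Fin k) ℂ) ≠ 0 :=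
  fun h => X_ne_zero (R := ℂ) _ (congrFun h 0)

/-! ### A chain of irreducible closed subsets -/

/-- The variables kept at stage `s`. -/
def keepVar {M k : ℕ} (s : ℕ) : Fin (M + 1) ⊕ Fin (k + 1) → Prop
  | Sum.inl i => i.val ≤ s
  | Sum.inr l => l = 0 ∨ M + l.val ≤ s

open Classical in
/-- Specialization killing the variables not kept at stage `s`. -/
def kap {M k : ℕ} (s : ℕ) :
    MvPolynomial (Fin (M + 1) ⊕ Fin (k + 1)) ℂ →ₐ[ℂ] MvPolynomial (Fin (M + 1) ⊕ Fin (k + 1)) ℂ :=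
  aeval (fun t => if keepVar s t then X t else 0)

lemma keepVar_mono {M k s s' : ℕ} (h : s ≤ s') {t : Fin (M + 1) ⊕ Fin (k + 1)}
    (ht : keepVar s t) : keepVar s' t := by
  cases t with
  | inl i => exact le_trans (show i.val ≤ s from ht) h
  | inr l => exact Or.imp id (fun h' => le_trans h' h) ht

lemma kap_X_keep {M k s : ℕ} {t : Fin (M + 1) ⊕ Fin (k + 1)} (ht : keepVar s t) :
    kap s (X t) = X t := by
  simp [kap, ht]

lemma kap_X_kill {M k s : ℕ} {t : Fin (M + 1) ⊕ Fin (k + 1)} (ht : ¬ keepVar s t) :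
    kap s (X t) = 0 := by
  simp [kap, ht]

lemma kap_kap {M k s s' : ℕ} (h : s ≤ s') (P : MvPolynomial (Fin (M + 1) ⊕ Fin (k + 1)) ℂ) :
    kap s (kap s' P) = kap s P := by
  have : (kap s).comp (kap s') = (kap s : MvPolynomial (Fin (M + 1) ⊕ Fin (k + 1)) ℂ →ₐ[ℂ] _) := by
    apply MvPolynomial.algHom_ext
    intro t
    rw [AlgHom.comp_apply]
    by_cases h1 : keepVar s' t
    · rw [kap_X_keep h1]
    · rw [kap_X_kill h1, kap_X_kill (fun h2 => h1 (keepVar_mono h h2)), map_zero]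
  exact DFunLike.congr_fun this P

/-- Base point of the chain. -/
def basePt {M k : ℕ} : Fin (M + 1) ⊕ Fin (k + 1) → ℂ :=
  Sum.elim (fun i => if i = 0 then 1 else 0) (fun l => if l = 0 then 1 else 0)

lemma eval_kap {M k s : ℕ} (P : MvPolynomial (Fin (M + 1) ⊕ Fin (k + 1)) ℂ) :
    eval basePt (kap s P) = eval basePt P := by
  rw [kap, eval_aeval']
  congr 2
  funext t
  cases t with
  | inl i =>
    by_cases h : keepVar (k := k) s (Sum.inl i : Fin (M + 1) ⊕ Fin (k + 1))
    · simp [h]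
    · have : i ≠ 0 := by
        rintro rfl
        exact h (show (0 : Fin (M + 1)).val ≤ s by simp)
      simp [h, basePt, this]
  | inr l =>
    by_cases h : keepVar (M := M) s (Sum.inr l : Fin (M + 1) ⊕ Fin (k + 1))
    · simp [h]
    · have : l ≠ 0 := by
        rintro rfl
        exact h (Or.inl rfl)
      simp [h, basePt, this]

/-- First coordinates of the parametrization adapted to a base point `c`. -/
def chainF {M : ℕ} (k : ℕ) (c : Fin (M + 1) → ℂ) (i : Fin (M + 1)) :
    MvPolynomial (Fin (M + 1) ⊕ Fin (k + 1)) ℂ :=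
  C (c i) * X (Sum.inl 0) + if i = 0 then 0 else X (Sum.inl i)

/-- Second coordinates of the parametrization adapted to a base point `c`. -/
def chainG {M N k : ℕ} (c : Fin (M + 1) → ℂ)
    (v : Fin (k + 1) → Fin N → MvPolynomial (Fin (M + 1)) ℂ) (j : Fin N) :
    MvPolynomial (Fin (M + 1) ⊕ Fin (k + 1)) ℂ :=
  ∑ l, X (Sum.inr l) * aeval (chainF k c) (v l j)

lemma eval_chainF {M k : ℕ} (c : Fin (M + 1) → ℂ) (i : Fin (M + 1)) :
    eval basePt (chainF k c i) = c i := by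
  by_cases h : i = 0 <;> simp [chainF, basePt, h]

lemma eval_chainG {M N k : ℕ} {D : MvPolynomial (Fin (M + 1)) ℂ} {e : Fin (k + 1) → Fin N}
    {v : Fin (k + 1) → Fin N → MvPolynomial (Fin (M + 1)) ℂ}
    (c : Fin (M + 1) → ℂ)
    (hve : ∀ l l', v l (e l') = if l = l' then D else 0) :
    eval basePt (chainG c v (e 0)) = eval c D := by
  have h : ∀ P, eval basePt (aeval (chainF k c) P) = eval c P := by
    intro P
    rw [eval_aeval']
    simp only [eval_chainF]
  rw [chainG, map_sum]
  simp only [map_mul, h, hve]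
  rw [Finset.sum_eq_single 0 (by intro b _ hb; simp [hb]) (by simp)]
  simp [basePt]

lemma chainG_e {M N k : ℕ} {D : MvPolynomial (Fin (M + 1)) ℂ} {e : Fin (k + 1) → Fin N}
    {v : Fin (k + 1) → Fin N → MvPolynomial (Fin (M + 1)) ℂ}
    (c : Fin (M + 1) → ℂ)
    (hve : ∀ l l', v l (e l') = if l = l' then D else 0) (l : Fin (k + 1)) :
    chainG c v (e l) = X (Sum.inr l) * aeval (chainF k c) D := by
  rw [chainG, Finset.sum_eq_single l (by intro b _ hb; simp [hve, hb]) (by simp)]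
  simp [hve]

/-- The stages of the chain. -/
def chainZ {M N k : ℕ} (c : Fin (M + 1) → ℂ)
    (v : Fin (k + 1) → Fin N → MvPolynomial (Fin (M + 1)) ℂ) (s : ℕ) : Set (PSp (M + 1) × PSp N) :=
  paramSet (fun i => kap s (chainF k c i)) (fun j => kap s (chainG c v j))

section
variable {M N k : ℕ} {D : MvPolynomial (Fin (M + 1)) ℂ} {e : Fin (k + 1) → Fin N}
    {v : Fin (k + 1) → Fin N → MvPolynomial (Fin (M + 1)) ℂ}
    (hve : ∀ l l', v l (e l') = if l = l' then D else 0)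
    {c : Fin (M + 1) → ℂ} (hc0 : c 0 ≠ 0) (hcD : eval c D ≠ 0)

lemma chainF_ne (hc0 : c 0 ≠ 0) (s : ℕ) : (fun i => kap s (chainF k c i)) ≠ 0 := by
  intro h
  have := congrArg (eval basePt) (congrFun h 0)
  rw [eval_kap, eval_chainF] at this
  exact hc0 (by simpa using this)

lemma chainG_ne (hve : ∀ l l', v l (e l') = if l = l' then D else 0) (hcD : eval c D ≠ 0) (s : ℕ) :
    (fun j => kap s (chainG c v j)) ≠ 0 := by
  intro h
  have := congrArg (eval basePt) (congrFun h (e 0))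
  rw [eval_kap, eval_chainG c hve] at this
  exact hcD (by simpa using this)

lemma chainZ_mono (hve : ∀ l l', v l (e l') = if l = l' then D else 0) (hc0 : c 0 ≠ 0)
    (hcD : eval c D ≠ 0) {s s' : ℕ} (h : s ≤ s') :
    chainZ c v s ⊆ @closure _ (zariskiProd (M + 1) N) (chainZ c v s') :=
  paramSet_subset_closure (chainF_ne hc0 s) (chainG_ne hve hcD s) (chainF_ne hc0 s')
    (chainG_ne hve hcD s') (kap s) (fun i => kap_kap h _) (fun j => kap_kap h _)

lemma chainZ_sub (hD : D ≠ 0) (hve : ∀ l l', v l (e l') = if l = l' then D else 0) (hc0 : c 0 ≠ 0)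
    (hcD : eval c D ≠ 0) (s : ℕ) :
    chainZ c v s ⊆ @closure _ (zariskiProd (M + 1) N)
      (paramSet (fun i => X (Sum.inl i)) (kerParam v)) := by
  refine paramSet_subset_closure (chainF_ne hc0 s) (chainG_ne hve hcD s) X_inl_ne
    (kerParam_ne hD hve)
    (aeval (Sum.elim (fun i => kap s (chainF k c i)) (fun l => kap s (X (Sum.inr l))))) ?_ ?_
  · intro i
    simp
  · intro j
    rw [kerParam, chainG, map_sum, map_sum]
    refine Finset.sum_congr rfl fun l _ => ?_
    rw [map_mul, map_mul, aeval_X, aeval_rename, Sum.elim_inr, comp_aeval_apply]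
    rfl

lemma chainZ_strict (hve : ∀ l l', v l (e l') = if l = l' then D else 0) (hc0 : c 0 ≠ 0)
    (hcD : eval c D ≠ 0) {s s' : ℕ} (h : s < s') (hs' : s' ≤ M + k) :
    ¬ chainZ c v s' ⊆ @closure _ (zariskiProd (M + 1) N) (chainZ c v s) := by
  intro hsub
  have key : ∀ P : BiPoly (M + 1) N, IsBihomogeneous P →
      aeval (Sum.elim (fun i => kap s (chainF k c i)) (fun j => kap s (chainG c v j))) P = 0 →
      aeval (Sum.elim (fun i => kap s' (chainF k c i)) (fun j => kap s' (chainG c v j))) P = 0 := by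
    intro P hP h0
    rw [← paramSet_subset_iff (chainF_ne hc0 s') (chainG_ne hve hcD s') hP]
    refine hsub.trans ((zclosure_subset_biZeroSet hP).2 ?_)
    exact (paramSet_subset_iff (chainF_ne hc0 s) (chainG_ne hve hcD s) hP).2 h0
  have hF0 : ∀ s, kap s (chainF k c 0) = C (c 0) * X (Sum.inl 0) := by
    intro s
    have : keepVar (k := k) s (Sum.inl 0 : Fin (M + 1) ⊕ Fin (k + 1)) :=
      show (0 : Fin (M + 1)).val ≤ s by simp
    simp [chainF, kap_X_keep this, algHom_C]
  by_cases hM : s + 1 ≤ M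
  · set i : Fin (M + 1) := ⟨s + 1, by omega⟩ with hi
    have hi0 : i ≠ 0 := by
      intro h
      have := congrArg Fin.val h
      simp [hi] at this
    have h2 := key _ (bihom_inl (c 0) (c i) i 0)
    have hcalc : ∀ s, C (c 0) * kap s (chainF k c i) - C (c i) * kap s (chainF k c 0) =
        C (c 0) * kap s (X (Sum.inl i)) := by
      intro s
      have h3 : C (c 0) * chainF k c i - C (c i) * chainF k c 0 = C (c 0) * X (Sum.inl i) := by
        simp only [chainF, if_neg hi0, if_true]
        ring
      have h4 := congrArg (kap s) h3
      simpa [algHom_C] using h4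
    simp only [map_sub, map_mul, algHom_C, aeval_X, Sum.elim_inl, algebraMap_eq] at h2
    rw [hcalc, hcalc] at h2
    have k1 : ¬ keepVar (k := k) s (Sum.inl i : Fin (M + 1) ⊕ Fin (k + 1)) := by
      intro h
      have : i.val ≤ s := h
      simp [hi] at this
    have k2 : keepVar (k := k) s' (Sum.inl i : Fin (M + 1) ⊕ Fin (k + 1)) :=
      show i.val ≤ s' from h
    rw [kap_X_kill k1, kap_X_keep k2] at h2
    have := h2 (mul_zero _)
    simp [hc0] at this
  · set l : Fin (k + 1) := ⟨s + 1 - M, by omega⟩ with hl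
    have h2 := key _ (bihom_inr (e l))
    simp only [aeval_X, Sum.elim_inr, chainG_e c hve, map_mul] at h2
    have k1 : ¬ keepVar (M := M) s (Sum.inr l : Fin (M + 1) ⊕ Fin (k + 1)) := by
      rintro (h | h)
      · have := congrArg Fin.val h
        simp [hl] at this
        omega
      · simp [hl] at h
        omega
    have k2 : keepVar (M := M) s' (Sum.inr l : Fin (M + 1) ⊕ Fin (k + 1)) := by
      right
      simp [hl]
      omega
    rw [kap_X_kill k1, kap_X_keep k2] at h2
    have h3 := h2 (zero_mul _)
    rcases mul_eq_zero.1 h3 with h4 | h4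
    · exact X_ne_zero _ h4
    · have h5 := congrArg (eval basePt) h4
      rw [eval_kap, eval_aeval', map_zero] at h5
      simp only [eval_chainF] at h5
      exact hcD h5

end

/-- The component `Y₀` of the incidence variety `Y = {(x,z) : J_h(x)·z = 0}` lying over the
locus `U` where the Jacobian `J_h` attains its generic rank `r`: if `r = n+1` then
`Y₀ = ∅`, and if `r < n+1` then `Y₀` is irreducible of dimension `m+1+n-r`; consequently
`pr₂(Y₀) ≠ ∅` iff `r < n+1`, in which case `pr₂(Y₀)` is irreducible. -/
theorem Y0_irreducible_of_dimension
    (m n d r : ℕ)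
    (h : Fin (n + 1) → MvPolynomial (Fin (m + 2)) ℂ)
    (hdeg : ∀ j, (h j).IsHomogeneous d)
    (hind : LinearIndependent ℂ h)
    (J : Matrix (Fin (m + 2)) (Fin (n + 1)) (MvPolynomial (Fin (m + 2)) ℂ))
    (hJ : ∀ i j, J i j = pderiv i (h j))
    (hr : r = (J.map (algebraMap (MvPolynomial (Fin (m + 2)) ℂ)
        (FractionRing (MvPolynomial (Fin (m + 2)) ℂ)))).rank)
    (U : Set (PSp (m + 2)))
    (hU : U = {x | (J.map (eval x.rep)).rank = r})
    (Y : Set (PSp (m + 2) × PSp (n + 1)))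
    (hY : Y = {p | (J.map (eval p.1.rep)).mulVec p.2.rep = 0})
    (Y₀ : Set (PSp (m + 2) × PSp (n + 1)))
    (hY₀ : Y₀ = @closure _ (zariskiProd (m + 2) (n + 1)) (Y ∩ (U ×ˢ Set.univ))) :
    (r = n + 1 → Y₀ = ∅) ∧
    (r < n + 1 →
      @IsIrreducible _ (zariskiProd (m + 2) (n + 1)) Y₀ ∧
      @topologicalKrullDim ↥Y₀
        (TopologicalSpace.induced Subtype.val (zariskiProd (m + 2) (n + 1))) =
        ((m + 1 + n - r : ℕ) : WithBot ℕ∞)) ∧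
    ((Prod.snd '' Y₀).Nonempty ↔ r < n + 1) ∧
    (r < n + 1 → @IsIrreducible _ (zariski (n + 1)) (Prod.snd '' Y₀)) := by
  have hJh : ∀ i j, (J i j).IsHomogeneous (d - 1) := by
    intro i j
    rw [hJ]
    exact (hdeg j).pderiv
  set W : Set (PSp (m + 2) × PSp (n + 1)) := Y ∩ (U ×ˢ Set.univ) with hWdef
  have hW : W = {p | (J.map (eval p.1.rep)).mulVec p.2.rep = 0 ∧
      (J.map (eval p.1.rep)).rank = r} := by
    rw [hWdef, hY, hU]
    ext p
    simp
  have hrle : r ≤ n + 1 := by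
    rw [hr]
    simpa using Matrix.rank_le_width (J.map (algebraMap (MvPolynomial (Fin (m + 2)) ℂ)
        (FractionRing (MvPolynomial (Fin (m + 2)) ℂ))))
  have hempty : r = n + 1 → Y₀ = ∅ := by
    intro hrn
    have hWe : W = ∅ := by
      rw [Set.eq_empty_iff_forall_notMem]
      intro p hp
      rw [hW] at hp
      obtain ⟨h1, h2⟩ := hp
      have h3 := (J.map (eval p.1.rep)).mulVecLin.finrank_range_add_finrank_ker
      rw [show Module.finrank ℂ (LinearMap.range (J.map (eval p.1.rep)).mulVecLin) = n + 1 from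
        h2.trans hrn] at h3
      have h4 : Module.finrank ℂ (LinearMap.ker (J.map (eval p.1.rep)).mulVecLin) = 0 := by
        simpa using h3
      rw [Submodule.finrank_eq_zero] at h4
      have h5 : p.2.rep ∈ LinearMap.ker (J.map (eval p.1.rep)).mulVecLin := h1
      rw [h4] at h5
      exact p.2.rep_nonzero h5
    let _ := zariskiProd (m + 2) (n + 1)
    rw [hY₀, hWe]
    exact closure_empty
  have hmain : r < n + 1 → @IsIrreducible _ (zariskiProd (m + 2) (n + 1)) Y₀ ∧
      @topologicalKrullDim ↥Y₀
        (TopologicalSpace.induced Subtype.val (zariskiProd (m + 2) (n + 1))) =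
        ((m + 1 + n - r : ℕ) : WithBot ℕ∞) := by
    intro hlt
    obtain ⟨k, hk⟩ : ∃ k, r + (k + 1) = n + 1 := ⟨n - r, by omega⟩
    obtain ⟨D, e, v, hD, hv, hve, hw⟩ := exists_kernel J hr hk
    have hiff : ∀ {P : BiPoly (m + 2) (n + 1)}, IsBihomogeneous P →
        (W ⊆ biZeroSet P ↔ kerHom v P = 0) := fun hP =>
      subset_iff_kerHom J hr hJh D e v hD hv hve hw W hW hP
    have hf : (fun i => X (Sum.inl i) : Fin (m + 2) →
      MvPolynomial (Fin (m + 2) ⊕ Fin (k + 1)) ℂ) ≠ 0 := X_inl_ne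
    have hg : kerParam v ≠ 0 := kerParam_ne hD hve
    have hcl : Y₀ = @closure _ (zariskiProd (m + 2) (n + 1))
        (paramSet (fun i => X (Sum.inl i)) (kerParam v)) := by
      rw [hY₀]
      ext p
      rw [mem_zclosure_iff, mem_zclosure_iff]
      refine forall_congr' fun P => forall_congr' fun hP => ?_
      rw [hiff hP, paramSet_subset_iff hf hg hP]
      rfl
    have hirr : @IsIrreducible _ (zariskiProd (m + 2) (n + 1)) Y₀ := by
      let _ := zariskiProd (m + 2) (n + 1)
      rw [hcl, isIrreducible_iff_closure]
      exact paramSet_irreducible hf hg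
    refine ⟨hirr, ?_⟩
    have hnum : m + 1 + n - r = m + 1 + k := by omega
    rw [hnum]
    refine le_antisymm ?_ ?_
    · refine zdim_le Y₀ (m + 1 + k) (τ := Fin (m + 2) ⊕ Fin (k + 1)) ?_ (kerHom v) ?_
      · simp
        omega
      · rw [hY₀, coneIdeal_zclosure]
        exact ker_le_cone J hr hJh D e v hD hw W hW
    · obtain ⟨c, hc⟩ := exists_eval_ne (mul_ne_zero hD (X_ne_zero (R := ℂ) (0 : Fin (m + 2))))
      rw [map_mul, eval_X] at hc
      have hcD := left_ne_zero_of_mul hc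
      have hc0 := right_ne_zero_of_mul hc
      let _ := zariskiProd (m + 2) (n + 1)
      refine le_topDim Y₀ (m + 1 + k) (fun s => chainZ c v s.val) ?_ ?_ ?_ ?_
      · intro s
        exact paramSet_irreducible (chainF_ne hc0 _) (chainG_ne hve hcD _)
      · intro s
        rw [hcl]
        exact chainZ_sub hD hve hc0 hcD _
      · intro s s' hs
        exact chainZ_mono hve hc0 hcD (le_of_lt hs)
      · intro s s' hs
        exact chainZ_strict hve hc0 hcD hs (by have := s'.2; omega)
  refine ⟨hempty, hmain, ?_, ?_⟩
  · constructor
    · intro hne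
      refine lt_of_le_of_ne hrle fun h => ?_
      rw [hempty h, Set.image_empty] at hne
      exact Set.not_nonempty_empty hne
    · intro hlt
      exact (hmain hlt).1.1.image _
  · intro hlt
    let _ := zariskiProd (m + 2) (n + 1)
    let _ := zariski (n + 1)
    exact (hmain hlt).1.image _ (continuous_snd_zariski (m + 2) (n + 1)).continuousOn
end
end

section
/- Equip ℤ^7 with the symmetric bilinear form B(u, v) = u₁v₁ − u₂v₂ − ⋯ − u₇v₇, let H = (3, −1, −1, −1, −1, −1, −1), and let S = {L ∈ ℤ^7 : B(L, L) = −1, B(L, H) = 1} (a set of 27 elements). If M : ℤ^7 → ℤ^7 is a ℤ-linear automorphism satisfying B(Mu, Mv) = B(u, v) for all u, v and M(H) = H, then M maps S bijectively onto S. Moreover, M is uniquely determined by the induced permutation of S: if M and M' are two such automorphisms with M(L) = M'(L) for every L ∈ S, then M = M'. -/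
noncomputable section

/-- The unimodular bilinear form of signature `(1,6)` on `ℤ^7`, given by the diagonal
matrix `diag(1, -1, -1, -1, -1, -1, -1)`. -/
def cubicForm (u v : Fin 7 → ℤ) : ℤ :=
  u 0 * v 0 - u 1 * v 1 - u 2 * v 2 - u 3 * v 3 - u 4 * v 4 - u 5 * v 5 - u 6 * v 6

/-- The hyperplane class `H = (3, -1, -1, -1, -1, -1, -1)`. -/
def hypClass : Fin 7 → ℤ := ![3, -1, -1, -1, -1, -1, -1]

/-- The set of homology classes of the 27 lines: `L² = -1` and `L·H = 1`. -/
def lineClasses : Set (Fin 7 → ℤ) :=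
  {L | cubicForm L L = -1 ∧ cubicForm L hypClass = 1}

/-- Any `ℤ`-linear automorphism of `ℤ^7` preserving the intersection form and the hyperplane
class permutes the set of 27 line classes, and is uniquely determined by the induced
permutation of the line classes. -/
theorem monodromy_permutes_lines_and_is_determined_by_permutation :
    (∀ M : (Fin 7 → ℤ) ≃ₗ[ℤ] (Fin 7 → ℤ),
      (∀ u v, cubicForm (M u) (M v) = cubicForm u v) → M hypClass = hypClass →
      Set.BijOn M lineClasses lineClasses) ∧
    (∀ M M' : (Fin 7 → ℤ) ≃ₗ[ℤ] (Fin 7 → ℤ),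
      (∀ u v, cubicForm (M u) (M v) = cubicForm u v) → M hypClass = hypClass →
      (∀ u v, cubicForm (M' u) (M' v) = cubicForm u v) → M' hypClass = hypClass →
      (∀ L ∈ lineClasses, M L = M' L) → M = M') := by
  constructor
  · intro M hB hH
    refine ⟨?_, M.injective.injOn, ?_⟩
    · rintro L ⟨h1, h2⟩
      refine ⟨by rw [hB, h1], ?_⟩
      rw [← hH, hB, h2]
    · rintro L ⟨h1, h2⟩
      refine ⟨M.symm L, ⟨?_, ?_⟩, M.apply_symm_apply L⟩
      · rw [← hB, M.apply_symm_apply, h1]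
      · rw [← hB, M.apply_symm_apply, hH, h2]
  · intro M M' _ _ _ _ h
    have hE : ∀ i : Fin 7, i ≠ 0 → M (Pi.single i 1) = M' (Pi.single i 1) := by
      intro i hi
      apply h
      fin_cases i <;> first | exact absurd rfl hi | (constructor <;> decide)
    have hL := h (Pi.single 0 1 - Pi.single 1 1 - Pi.single 2 1) (by constructor <;> decide)
    have h0 : M (Pi.single 0 1) = M' (Pi.single 0 1) := by
      simpa only [map_sub, hE 1 (by decide), hE 2 (by decide), sub_left_inj] using hL
    apply LinearEquiv.toLinearMap_injective
    refine (Pi.basisFun ℤ (Fin 7)).ext fun i => ?_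
    rw [Pi.basisFun_apply]
    by_cases hi : i = 0
    · subst hi; exact h0
    · exact hE i hi
end
end

section
/- The Clebsch cubic surface is smooth: for the polynomial f₀ = x₀³ + x₁³ + x₂³ + x₃³ − (x₀ + x₁ + x₂ + x₃)³ in ℂ[x₀, x₁, x₂, x₃], there is no point (x₀, x₁, x₂, x₃) ∈ ℂ⁴ ∖ {0} at which all four partial derivatives ∂f₀/∂x₀, ∂f₀/∂x₁, ∂f₀/∂x₂, ∂f₀/∂x₃ vanish simultaneously. -/
open MvPolynomial

noncomputable section

/-- The defining polynomial of the Clebsch cubic surface: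
`f₀ = x₀³ + x₁³ + x₂³ + x₃³ - (x₀ + x₁ + x₂ + x₃)³`. -/
def clebsch : MvPolynomial (Fin 4) ℂ :=
  X 0 ^ 3 + X 1 ^ 3 + X 2 ^ 3 + X 3 ^ 3 - (X 0 + X 1 + X 2 + X 3) ^ 3

/-- The Clebsch cubic surface is smooth: the four partial derivatives of `f₀` have no
common zero in `ℂ⁴ ∖ {0}`. -/
theorem clebsch_is_smooth :
    ¬ ∃ x : Fin 4 → ℂ, x ≠ 0 ∧ ∀ i : Fin 4, eval x (pderiv i clebsch) = 0 := by
  rintro ⟨x, hx, h⟩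
  have key : ∀ i : Fin 4, x i ^ 2 = (x 0 + x 1 + x 2 + x 3) ^ 2 := by
    intro i
    have hi := h i
    fin_cases i <;>
      simp [clebsch, pderiv_X, Derivation.leibniz_pow, Pi.single_apply] at hi ⊢ <;>
      linear_combination (1 / 3 : ℂ) * hi
  have hs : x 0 + x 1 + x 2 + x 3 = 0 := by
    generalize hS : x 0 + x 1 + x 2 + x 3 = s at key
    rcases sq_eq_sq_iff_eq_or_eq_neg.mp (key 0) with h0 | h0 <;>
    rcases sq_eq_sq_iff_eq_or_eq_neg.mp (key 1) with h1 | h1 <;>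
    rcases sq_eq_sq_iff_eq_or_eq_neg.mp (key 2) with h2 | h2 <;>
    rcases sq_eq_sq_iff_eq_or_eq_neg.mp (key 3) with h3 | h3 <;>
    rw [h0, h1, h2, h3] at hS <;> grind
  apply hx
  funext i
  have hi := key i
  rw [hs] at hi
  simpa using hi
end
end

section
/- Let S₅ act on homogeneous cubic forms in ℂ[x₀, x₁, x₂, x₃] through the pentahedral action: a permutation σ of the five linear forms ℓ₀ = x₀, ℓ₁ = x₁, ℓ₂ = x₂, ℓ₃ = x₃, ℓ₄ = −(x₀ + x₁ + x₂ + x₃) acts on a cubic form by the corresponding linear substitution of variables (the unique linear change of the xᵢ sending ℓᵢ to ℓ_{σ(i)} for all i). Then the subspace of degree-3 forms invariant under every element of S₅ is one-dimensional, spanned by f₀ = x₀³ + x₁³ + x₂³ + x₃³ − (x₀ + x₁ + x₂ + x₃)³. -/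
open MvPolynomial

noncomputable section

/-- The five linear forms of the pentahedron: `ℓ₀ = x₀, ℓ₁ = x₁, ℓ₂ = x₂, ℓ₃ = x₃,`
`ℓ₄ = -(x₀ + x₁ + x₂ + x₃)`; they satisfy `ℓ₀ + ℓ₁ + ℓ₂ + ℓ₃ + ℓ₄ = 0`. -/
def pentForm : Fin 5 → MvPolynomial (Fin 4) ℂ :=
  ![X 0, X 1, X 2, X 3, -(X 0 + X 1 + X 2 + X 3)]

/-- The pentahedral action of a permutation `σ ∈ S₅` on polynomials in `x₀, …, x₃`:
the linear substitution of the variables sending `ℓᵢ` to `ℓ_{σ(i)}` for all `i`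
(it suffices to substitute `xᵢ = ℓᵢ ↦ ℓ_{σ(i)}` for `i = 0, …, 3`; then automatically
`ℓ₄ ↦ ℓ_{σ(4)}` since the five forms sum to zero). -/
def pentAct (σ : Equiv.Perm (Fin 5)) :
    MvPolynomial (Fin 4) ℂ →ₐ[ℂ] MvPolynomial (Fin 4) ℂ :=
  aeval fun i : Fin 4 => pentForm (σ i.castSucc)

lemma clebsch_eq_sum : clebsch = ∑ i, pentForm i ^ 3 := by
  simp [clebsch, pentForm, Fin.sum_univ_five]
  ring

lemma pentForm_sum : ∑ i, pentForm i = 0 := by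
  simp [pentForm, Fin.sum_univ_five]

lemma pentAct_castSucc (σ : Equiv.Perm (Fin 5)) (i : Fin 4) :
    pentAct σ (pentForm i.castSucc) = pentForm (σ i.castSucc) := by
  have : pentForm i.castSucc = X i := by fin_cases i <;> rfl
  rw [this, pentAct, aeval_X]

lemma pentAct_pentForm (σ : Equiv.Perm (Fin 5)) (i : Fin 5) :
    pentAct σ (pentForm i) = pentForm (σ i) := by
  refine Fin.lastCases ?_ (fun j => pentAct_castSucc σ j) i
  have h1 := congrArg (pentAct σ) pentForm_sum
  have h2 : ∑ i, pentForm (σ i) = 0 := (Equiv.sum_comp σ pentForm).trans pentForm_sum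
  rw [map_sum, map_zero, Fin.sum_univ_castSucc] at h1
  rw [Fin.sum_univ_castSucc] at h2
  simp only [pentAct_castSucc] at h1
  exact add_left_cancel (h1.trans h2.symm)

lemma pentAct_clebsch (σ : Equiv.Perm (Fin 5)) : pentAct σ clebsch = clebsch := by
  rw [clebsch_eq_sum, map_sum]
  simp only [map_pow, pentAct_pentForm]
  exact Equiv.sum_comp σ (fun i => pentForm i ^ 3)

lemma clebsch_homog : clebsch.IsHomogeneous 3 := by
  have h : ∀ i : Fin 4, (X i : MvPolynomial (Fin 4) ℂ).IsHomogeneous 1 :=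
    fun i => isHomogeneous_X ℂ i
  have h3 : ∀ i : Fin 4, ((X i : MvPolynomial (Fin 4) ℂ) ^ 3).IsHomogeneous 3 :=
    fun i => by simpa using (h i).pow 3
  have hs : ((X 0 + X 1 + X 2 + X 3 : MvPolynomial (Fin 4) ℂ) ^ 3).IsHomogeneous 3 := by
    simpa using ((((h 0).add (h 1)).add (h 2)).add (h 3)).pow 3
  exact ((((h3 0).add (h3 1)).add (h3 2)).add (h3 3)).sub hs

/-- The coefficient of a polynomial at an exponent vector. -/
def cf (f : MvPolynomial (Fin 4) ℂ) (v : Fin 4 → ℕ) : ℂ :=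
  coeff (Finsupp.equivFunOnFinite.symm v) f

lemma homog_expand (f : MvPolynomial (Fin 4) ℂ) (hf : f.IsHomogeneous 3) :
    f = ∑ v ∈ Finset.Nat.antidiagonalTuple 4 3, C (cf f v) * ∏ i, X i ^ v i := by
  have key : ∀ v : Fin 4 → ℕ, C (cf f v) * ∏ i, X i ^ v i =
      monomial (Finsupp.equivFunOnFinite.symm v) (cf f v) := by
    intro v
    rw [monomial_eq, Finsupp.prod_fintype _ _ (by simp)]
    rfl
  simp only [key]
  ext d
  rw [coeff_sum]
  simp only [coeff_monomial]
  rw [Finset.sum_eq_single (d : Fin 4 → ℕ)]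
  · simp [cf]
  · intro v _ hv
    rw [if_neg]
    rintro rfl
    exact hv rfl
  · intro hd
    simp only [Finsupp.equivFunOnFinite_symm_coe, if_true, cf]
    apply hf.coeff_eq_zero
    rw [Finset.Nat.mem_antidiagonalTuple] at hd
    rwa [Finsupp.degree_eq_sum]

lemma cf_symm (f : MvPolynomial (Fin 4) ℂ) (hf : ∀ σ, pentAct σ f = f)
    (τ : Equiv.Perm (Fin 4)) (σ : Equiv.Perm (Fin 5))
    (h : ∀ i : Fin 4, σ i.castSucc = (τ i).castSucc) (v : Fin 4 → ℕ) :
    cf f (v ∘ τ) = cf f v := by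
  have hr : rename τ f = f := by
    conv_rhs => rw [← hf σ]
    rw [rename_eq_aeval, pentAct]
    congr 2
    funext i
    rw [h, Function.comp_apply]
    generalize τ i = j
    fin_cases j <;> rfl
  unfold cf
  conv_rhs => rw [← hr]
  rw [← coeff_rename_mapDomain τ τ.injective]
  congr 1
  ext i
  rw [← Finsupp.equivMapDomain_eq_mapDomain]
  simp

lemma invariant_mem (f : MvPolynomial (Fin 4) ℂ) (hf : f.IsHomogeneous 3)
    (hi : ∀ σ, pentAct σ f = f) : ∃ c : ℂ, c • clebsch = f := by
  have s0 : ∀ a b c d, cf f ![a, b, c, d] = cf f ![b, a, c, d] := fun a b c d => by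
    rw [← cf_symm f hi (Equiv.swap 0 1) (Equiv.swap 0 1) (by decide)]
    congr 1; funext i; fin_cases i <;> rfl
  have s1 : ∀ a b c d, cf f ![a, b, c, d] = cf f ![a, c, b, d] := fun a b c d => by
    rw [← cf_symm f hi (Equiv.swap 1 2) (Equiv.swap 1 2) (by decide)]
    congr 1; funext i; fin_cases i <;> rfl
  have s2 : ∀ a b c d, cf f ![a, b, c, d] = cf f ![a, b, d, c] := fun a b c d => by
    rw [← cf_symm f hi (Equiv.swap 2 3) (Equiv.swap 2 3) (by decide)]
    congr 1; funext i; fin_cases i <;> rfl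
  have hE := homog_expand f hf
  have hl : Finset.Nat.antidiagonalTuple 4 3 =
    {![0,0,0,3], ![0,0,3,0], ![0,3,0,0], ![3,0,0,0],
     ![0,0,1,2], ![0,1,0,2], ![1,0,0,2], ![0,0,2,1], ![0,1,2,0], ![1,0,2,0],
     ![0,2,0,1], ![0,2,1,0], ![1,2,0,0], ![2,0,0,1], ![2,0,1,0], ![2,1,0,0],
     ![0,1,1,1], ![1,0,1,1], ![1,1,0,1], ![1,1,1,0]} := by decide
  rw [hl] at hE
  have a1 := s2 0 0 0 3
  have a2 := s1 0 0 3 0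
  have a3 := s0 0 3 0 0
  have b1 := s1 0 0 1 2
  have b2 := s0 0 1 0 2
  have b3 := s2 0 0 1 2
  have b4 := s2 0 1 0 2
  have b5 := s2 1 0 0 2
  have b6 := s1 0 0 2 1
  have b7 := s1 0 1 2 0
  have b8 := s1 1 0 2 0
  have b9 := s0 0 2 0 1
  have b10 := s0 0 2 1 0
  have b11 := s0 1 2 0 0
  have c1 := s0 0 1 1 1
  have c2 := s1 1 0 1 1
  have c3 := s2 1 1 0 1
  repeat rw [Finset.sum_insert (by decide)] at hE
  rw [Finset.sum_singleton] at hE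
  rw [← c3, ← c2, ← c1, ← b11, ← b10, ← b9, ← b8, ← b7, ← b6, ← b5, ← b4, ← b3, ← b2, ← b1,
    ← a3, ← a2, ← a1] at hE
  generalize cf f ![0,0,0,3] = A at hE
  generalize cf f ![0,0,1,2] = B at hE
  generalize cf f ![0,1,1,1] = D at hE
  simp [Fin.prod_univ_four] at hE
  have hs := hi (Equiv.swap 3 4)
  have hp : ∀ i : Fin 4, pentForm (Equiv.swap 3 4 i.castSucc) =
      ![X 0, X 1, X 2, -(X 0 + X 1 + X 2 + X 3)] i := by
    intro i; fin_cases i <;> rfl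
  simp only [pentAct, hp] at hs
  rw [hE] at hs
  have e1 := congrArg (eval ![0,0,0,1]) hs
  have e2 := congrArg (eval ![1,1,0,1]) hs
  simp at e1 e2
  have hA : A = 0 := by linear_combination (-1/2) * e1
  have hD : D = 2 * B := by
    rw [hA] at e2
    linear_combination (-1/4) * e2
  refine ⟨-B/3, ?_⟩
  have hB : B = -3 * (-B/3) := by ring
  rw [hE, hA, hD]
  generalize -B/3 = k at *
  rw [hB, smul_eq_C_mul, clebsch]
  simp only [map_mul, map_neg, map_ofNat, map_zero]
  ring

/-- The space of cubic forms invariant under the pentahedral action of every element of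
`S₅` is one-dimensional, spanned by the Clebsch cubic `f₀`. -/
theorem S5_invariant_cubics_eq_span_clebsch :
    clebsch ≠ 0 ∧
    {f : MvPolynomial (Fin 4) ℂ | f.IsHomogeneous 3 ∧
        ∀ σ : Equiv.Perm (Fin 5), pentAct σ f = f} =
      Set.range fun c : ℂ => c • clebsch := by
  refine ⟨?_, ?_⟩
  · intro h
    have := congrArg (eval ![1, 1, 0, 0]) h
    simp [clebsch] at this
    norm_num at this
  · ext f
    constructor
    · rintro ⟨h1, h2⟩
      exact invariant_mem f h1 h2
    · rintro ⟨c, rfl⟩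
      refine ⟨?_, fun σ => ?_⟩
      · show (c • clebsch).IsHomogeneous 3
        rw [smul_eq_C_mul]
        simpa using (isHomogeneous_C (Fin 4) c).mul clebsch_homog
      · show pentAct σ (c • clebsch) = c • clebsch
        rw [map_smul, pentAct_clebsch]
end
end

section
/- A homogeneous cubic polynomial in ℂ[x₀, x₁, x₂, x₃] that is invariant under every even permutation of the four variables x₀, x₁, x₂, x₃ is invariant under every permutation of the variables. Equivalently, the A₄-invariant subspace of degree-3 forms coincides with the S₄-invariant subspace (and in particular has dimension 3). -/
open MvPolynomial

noncomputable section

/-- A homogeneous cubic polynomial in `ℂ[x₀,x₁,x₂,x₃]` that is invariant under every even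
permutation of the four variables is invariant under every permutation of the variables,
i.e. the `A₄`-invariant cubic forms coincide with the `S₄`-invariant ones. -/
theorem A4_invariant_cubics_are_S4_invariant
    (f : MvPolynomial (Fin 4) ℂ) (hf : f.IsHomogeneous 3)
    (hinv : ∀ σ ∈ alternatingGroup (Fin 4), rename σ f = f) :
    ∀ σ : Equiv.Perm (Fin 4), rename σ f = f := by
  intro σ
  by_cases hσ : σ ∈ alternatingGroup (Fin 4)
  · exact hinv σ hσ
  ext e
  obtain ⟨d, rfl⟩ : ∃ d : Fin 4 →₀ ℕ, d.mapDomain σ = e :=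
    ⟨e.mapDomain σ.symm, by
      rw [← Finsupp.mapDomain_comp]; simp [Finsupp.mapDomain_id]⟩
  by_cases hd : d.degree = 3
  · have hij : ∃ i j : Fin 4, i ≠ j ∧ d i = d j := by
      by_contra! h
      rw [Finsupp.degree_eq_sum, Fin.sum_univ_four] at hd
      have h01 := h 0 1 (by decide)
      have h02 := h 0 2 (by decide)
      have h03 := h 0 3 (by decide)
      have h12 := h 1 2 (by decide)
      have h13 := h 1 3 (by decide)
      have h23 := h 2 3 (by decide)
      omega
    obtain ⟨i, j, hne, hv⟩ := hij
    have hτ : d.mapDomain (Equiv.swap i j) = d := by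
      ext k
      rw [Finsupp.mapDomain_equiv_apply, Equiv.symm_swap, Equiv.swap_apply_def]
      split_ifs with h1 h2
      · rw [h1, hv]
      · rw [h2, hv]
      · rfl
    have hmem : σ * Equiv.swap i j ∈ alternatingGroup (Fin 4) := by
      rw [Equiv.Perm.mem_alternatingGroup] at hσ ⊢
      rw [Equiv.Perm.sign_mul, Equiv.Perm.sign_swap hne,
        (Int.units_eq_one_or _).resolve_left hσ]
      decide
    have hm : d.mapDomain (σ * Equiv.swap i j : Equiv.Perm (Fin 4)) = d.mapDomain σ := by
      rw [Equiv.Perm.coe_mul, Finsupp.mapDomain_comp, hτ]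
    have h1 := coeff_rename_mapDomain _ (σ * Equiv.swap i j).injective f d
    rw [hinv _ hmem, hm] at h1
    rw [coeff_rename_mapDomain _ σ.injective, h1]
  · have hd' : (d.mapDomain σ).degree ≠ 3 := by
      rwa [Finsupp.degree_mapDomain]
    rw [coeff_rename_mapDomain _ σ.injective, hf.coeff_eq_zero hd, hf.coeff_eq_zero hd']
end
end

section
/- Let h₀ = x₀³ + x₁³ + x₂³ + x₃³, h₁ = Σ_{i ≠ j} x_i²x_j (sum over the twelve monomials x_i²x_j with i ≠ j, indices in {0,1,2,3}), and h₂ = x₀x₁x₂ + x₀x₁x₃ + x₀x₂x₃ + x₁x₂x₃. For (z₀, z₁, z₂) ∈ ℂ³ ∖ {0}, set f = z₀h₀ + z₁h₁ + z₂h₂. Then there exists a point x ∈ ℂ⁴ ∖ {0} at which all four partial derivatives ∂f/∂x₀, …, ∂f/∂x₃ vanish simultaneously if and only if (3z₀ + z₁ − z₂)(z₀ + 3z₁ + z₂)(3z₀ − 3z₁ + z₂)(9z₀³ + 9z₀²z₁ − 3z₀²z₂ − 9z₀z₁² − 6z₀z₁z₂ + 4z₀z₂² + 7z₁³ − 3z₁²z₂)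 = 0. -/
open MvPolynomial

noncomputable section

/-- `h₀ = x₀³ + x₁³ + x₂³ + x₃³`. -/
def h0 : MvPolynomial (Fin 4) ℂ := X 0 ^ 3 + X 1 ^ 3 + X 2 ^ 3 + X 3 ^ 3

/-- `h₁ = Σ_{i ≠ j} xᵢ²xⱼ`, the sum of all twelve monomials `xᵢ²xⱼ` with `i ≠ j`. -/
def h1 : MvPolynomial (Fin 4) ℂ :=
  ∑ i : Fin 4, ∑ j : Fin 4, if i = j then 0 else X i ^ 2 * X j

/-- `h₂ = x₀x₁x₂ + x₀x₁x₃ + x₀x₂x₃ + x₁x₂x₃`. -/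
def h2 : MvPolynomial (Fin 4) ℂ :=
  X 0 * X 1 * X 2 + X 0 * X 1 * X 3 + X 0 * X 2 * X 3 + X 1 * X 2 * X 3


/-- The partial derivative of `f` with respect to the first argument, at `(a,b,c,d)`. -/
def pd (z0 z1 z2 a b c d : ℂ) : ℂ :=
  3 * z0 * a ^ 2 + z1 * (2 * a * (b + c + d) + b ^ 2 + c ^ 2 + d ^ 2) +
    z2 * (b * c + b * d + c * d)

/-- The cubic component. -/
def cub (z0 z1 z2 : ℂ) : ℂ :=
  9 * z0 ^ 3 + 9 * z0 ^ 2 * z1 - 3 * z0 ^ 2 * z2 - 9 * z0 * z1 ^ 2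
          - 6 * z0 * z1 * z2 + 4 * z0 * z2 ^ 2 + 7 * z1 ^ 3 - 3 * z1 ^ 2 * z2

lemma key4 (z0 z1 z2 a : ℂ) (ha : a ≠ 0) (h : pd z0 z1 z2 a a a a = 0) :
    z0 + 3 * z1 + z2 = 0 := by
  have : a ^ 2 * (z0 + 3 * z1 + z2) = 0 := by unfold pd at h; linear_combination h / 3
  exact (mul_eq_zero.mp this).resolve_left (pow_ne_zero _ ha)

lemma key22 (z0 z1 z2 a b : ℂ) (hab : a ≠ b)
    (h : pd z0 z1 z2 a a b b = 0) (h' : pd z0 z1 z2 b b a a = 0) :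
    3 * z0 + z1 - z2 = 0 := by
  have h1 : (a - b) * ((a + b) * (3 * z0 + z1 - z2)) = 0 := by
    unfold pd at h h'; linear_combination h - h'
  have h2 := (mul_eq_zero.mp h1).resolve_left (sub_ne_zero.mpr hab)
  rcases mul_eq_zero.mp h2 with h3 | h3
  · have hb : b = -a := by linear_combination h3
    subst hb
    have : a ^ 2 * (3 * z0 + z1 - z2) = 0 := by unfold pd at h; linear_combination h
    refine (mul_eq_zero.mp this).resolve_left (pow_ne_zero _ ?_)
    rintro rfl
    simp at hab
  · exact h3

lemma key31 (z0 z1 z2 a b : ℂ) (hab : a ≠ b)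
    (h : pd z0 z1 z2 a b b b = 0) (h' : pd z0 z1 z2 b b b a = 0) :
    cub z0 z1 z2 = 0 := by
  have h1 : (a - b) * ((3 * z0 - z1) * a + (3 * z0 + 3 * z1 - 2 * z2) * b) = 0 := by
    unfold pd at h h'; linear_combination h - h'
  have h2 := (mul_eq_zero.mp h1).resolve_left (sub_ne_zero.mpr hab)
  have h3 : z1 * a ^ 2 + 2 * (z1 + z2) * a * b + (3 * z0 + 6 * z1 + z2) * b ^ 2 = 0 := by
    unfold pd at h'; linear_combination h'
  have h4 : b ^ 2 * cub z0 z1 z2 = 0 := by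
    unfold cub
    linear_combination (3 * z0 - z1) ^ 2 / 3 * h3 - (z1 * ((3 * z0 - z1) * a -
      (3 * z0 + 3 * z1 - 2 * z2) * b) + 2 * (z1 + z2) * b * (3 * z0 - z1)) / 3 * h2
  rcases mul_eq_zero.mp h4 with h5 | h5
  · have hb : b = 0 := by simpa using h5
    subst hb
    have ha : a ≠ 0 := hab
    have e1 : z1 = 0 := by simpa [ha] using h3
    subst e1
    have e0 : z0 = 0 := by simpa [ha] using h2
    subst e0
    simp [cub]
  · exact h5

lemma third (z0 z1 z2 a b c d : ℂ) (hA : 3 * z0 - 3 * z1 + z2 ≠ 0) (hab : a ≠ b) (hac : a ≠ c)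
    (h1 : pd z0 z1 z2 a b c d = 0) (h2 : pd z0 z1 z2 b c d a = 0)
    (h3 : pd z0 z1 z2 c d a b = 0) : b = c := by
  have e1 : (a - b) * ((3 * z0 - 3 * z1 + z2) * (a + b) + (2 * z1 - z2) * (a + b + c + d)) = 0 := by
    unfold pd at *; linear_combination h1 - h2
  have e2 : (a - c) * ((3 * z0 - 3 * z1 + z2) * (a + c) + (2 * z1 - z2) * (a + b + c + d)) = 0 := by
    unfold pd at *; linear_combination h1 - h3
  have e1 := (mul_eq_zero.mp e1).resolve_left (sub_ne_zero.mpr hab)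
  have e2 := (mul_eq_zero.mp e2).resolve_left (sub_ne_zero.mpr hac)
  have e3 : (3 * z0 - 3 * z1 + z2) * (b - c) = 0 := by linear_combination e1 - e2
  exact sub_eq_zero.mp ((mul_eq_zero.mp e3).resolve_left hA)

lemma pd_rot (z0 z1 z2 a b c d : ℂ) : pd z0 z1 z2 a b c d = pd z0 z1 z2 a c d b := by
  unfold pd; ring

lemma pd_swap (z0 z1 z2 a b c d : ℂ) : pd z0 z1 z2 a b c d = pd z0 z1 z2 a c b d := by
  unfold pd; ring

/-- If `a ≠ b`, both remaining coordinates lie in `{a, b}`. -/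
lemma of_ne (z0 z1 z2 a b c d : ℂ) (hA : 3 * z0 - 3 * z1 + z2 ≠ 0) (hab : a ≠ b)
    (h1 : pd z0 z1 z2 a b c d = 0) (h2 : pd z0 z1 z2 b c d a = 0)
    (h3 : pd z0 z1 z2 c d a b = 0) (h4 : pd z0 z1 z2 d a b c = 0) :
    3 * z0 + z1 - z2 = 0 ∨ cub z0 z1 z2 = 0 := by
  have hc : c = a ∨ c = b := by
    by_cases hac : a = c
    · exact Or.inl hac.symm
    · exact Or.inr (third z0 z1 z2 a b c d hA hab hac h1 h2 h3).symm
  have hd : d = a ∨ d = b := by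
    by_cases had : a = d
    · exact Or.inl had.symm
    · refine Or.inr (third z0 z1 z2 a b d c hA hab had ?_ ?_ ?_).symm
      · rw [← h1]; unfold pd; ring
      · rw [← h2]; unfold pd; ring
      · rw [← h4]; unfold pd; ring
  rcases hc with rfl | rfl <;> rcases hd with rfl | rfl
  · right
    refine key31 z0 z1 z2 b _ hab.symm ?_ ?_
    · rw [← h2]
    · rw [← h1]; unfold pd; ring
  · left
    refine key22 z0 z1 z2 _ _ hab ?_ ?_
    · rw [← h1]; unfold pd; ring
    · rw [← h2]; unfold pd; ring
  · left
    refine key22 z0 z1 z2 _ _ hab ?_ ?_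
    · rw [← h1]; unfold pd; ring
    · rw [← h2]
  · right
    refine key31 z0 z1 z2 a _ hab ?_ ?_
    · rw [← h1]
    · rw [← h2]

lemma forward (z0 z1 z2 a b c d : ℂ) (hne : ¬ (a = 0 ∧ b = 0 ∧ c = 0 ∧ d = 0))
    (h1 : pd z0 z1 z2 a b c d = 0) (h2 : pd z0 z1 z2 b c d a = 0)
    (h3 : pd z0 z1 z2 c d a b = 0) (h4 : pd z0 z1 z2 d a b c = 0) :
    (3 * z0 + z1 - z2) * (z0 + 3 * z1 + z2) * (3 * z0 - 3 * z1 + z2) * cub z0 z1 z2 = 0 := by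
  by_cases hA : 3 * z0 - 3 * z1 + z2 = 0
  · simp [hA]
  by_cases hab : a = b
  · by_cases hac : a = c
    · by_cases had : a = d
      · subst hab hac had
        have ha : a ≠ 0 := fun h => hne ⟨h, h, h, h⟩
        simp [key4 z0 z1 z2 a ha h1]
      · rcases of_ne z0 z1 z2 a d b c hA had (by rw [← h1]; unfold pd; ring)
          (by rw [← h4]; unfold pd; ring) (by rw [← h2]; unfold pd; ring)
          (by rw [← h3]; unfold pd; ring) with h | h <;> simp [h]
    · rcases of_ne z0 z1 z2 a c b d hA hac (by rw [← h1]; unfold pd; ring)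
        (by rw [← h3]; unfold pd; ring) (by rw [← h2]; unfold pd; ring)
        (by rw [← h4]; unfold pd; ring) with h | h <;> simp [h]
  · rcases of_ne z0 z1 z2 a b c d hA hab h1 h2 h3 h4 with h | h <;> simp [h]

lemma backward (z0 z1 z2 : ℂ)
    (h : (3 * z0 + z1 - z2) * (z0 + 3 * z1 + z2) * (3 * z0 - 3 * z1 + z2) * cub z0 z1 z2 = 0) :
    ∃ a b c d : ℂ, ¬ (a = 0 ∧ b = 0 ∧ c = 0 ∧ d = 0) ∧ pd z0 z1 z2 a b c d = 0 ∧
      pd z0 z1 z2 b c d a = 0 ∧ pd z0 z1 z2 c d a b = 0 ∧ pd z0 z1 z2 d a b c = 0 := by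
  by_cases hA : 3 * z0 - 3 * z1 + z2 = 0
  · have hI := Complex.I_sq
    refine ⟨1, Complex.I, -1, -Complex.I, by simp, ?_, ?_, ?_, ?_⟩ <;> unfold pd
    · linear_combination hA + (2 * z1 - z2) * hI
    · linear_combination -hA + (3 * z0 - z1) * hI
    · linear_combination hA + (2 * z1 - z2) * hI
    · linear_combination -hA + (3 * z0 - z1) * hI
  have h := by simpa [hA] using h
  rcases h with (h | h) | h
  · refine ⟨1, 1, -1, -1, by simp, ?_, ?_, ?_, ?_⟩ <;> unfold pd <;> linear_combination h
  · refine ⟨1, 1, 1, 1, by simp, ?_, ?_, ?_, ?_⟩ <;> unfold pd <;> linear_combination 3 * h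
  · unfold cub at h
    refine ⟨-(3 * z0 + 3 * z1 - 2 * z2), 3 * z0 - z1, 3 * z0 - z1, 3 * z0 - z1, ?_, ?_, ?_, ?_, ?_⟩
    · rintro ⟨e1, e2, -, -⟩
      apply hA
      linear_combination (3 * e2 + e1) / 2
    all_goals unfold pd; linear_combination 3 * h

/-- The discriminant of the family of `S₄`-invariant cubic surfaces: for
`(z₀,z₁,z₂) ≠ 0`, the cubic surface defined by `f = z₀h₀ + z₁h₁ + z₂h₂` is singular
(its partial derivatives have a common zero in `ℂ⁴ ∖ {0}`) if and only if
`(3z₀+z₁-z₂)(z₀+3z₁+z₂)(3z₀-3z₁+z₂)(9z₀³+9z₀²z₁-3z₀²z₂-9z₀z₁²-6z₀z₁z₂+4z₀z₂²+7z₁³-3z₁²z₂) = 0`. -/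
theorem discriminant_S4_invariant_cubics
    (z0 z1 z2 : ℂ) (hz : ¬ (z0 = 0 ∧ z1 = 0 ∧ z2 = 0))
    (f : MvPolynomial (Fin 4) ℂ) (hf : f = C z0 * h0 + C z1 * h1 + C z2 * h2) :
    (∃ x : Fin 4 → ℂ, x ≠ 0 ∧ ∀ i : Fin 4, eval x (pderiv i f) = 0) ↔
      (3 * z0 + z1 - z2) * (z0 + 3 * z1 + z2) * (3 * z0 - 3 * z1 + z2) *
        (9 * z0 ^ 3 + 9 * z0 ^ 2 * z1 - 3 * z0 ^ 2 * z2 - 9 * z0 * z1 ^ 2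
          - 6 * z0 * z1 * z2 + 4 * z0 * z2 ^ 2 + 7 * z1 ^ 3 - 3 * z1 ^ 2 * z2) = 0 := by
  subst hf
  have hpd : ∀ x : Fin 4 → ℂ, (∀ i : Fin 4,
      eval x (pderiv i (C z0 * h0 + C z1 * h1 + C z2 * h2)) = 0) ↔
      (pd z0 z1 z2 (x 0) (x 1) (x 2) (x 3) = 0 ∧ pd z0 z1 z2 (x 1) (x 2) (x 3) (x 0) = 0 ∧
       pd z0 z1 z2 (x 2) (x 3) (x 0) (x 1) = 0 ∧ pd z0 z1 z2 (x 3) (x 0) (x 1) (x 2) = 0) := by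
    intro x
    have e0 : eval x (pderiv 0 (C z0 * h0 + C z1 * h1 + C z2 * h2)) =
        pd z0 z1 z2 (x 0) (x 1) (x 2) (x 3) := by
      simp [h0, h1, h2, Fin.sum_univ_four, pderiv_X, pd]; ring
    have e1 : eval x (pderiv 1 (C z0 * h0 + C z1 * h1 + C z2 * h2)) =
        pd z0 z1 z2 (x 1) (x 2) (x 3) (x 0) := by
      simp [h0, h1, h2, Fin.sum_univ_four, pderiv_X, pd]; ring
    have e2 : eval x (pderiv 2 (C z0 * h0 + C z1 * h1 + C z2 * h2)) =
        pd z0 z1 z2 (x 2) (x 3) (x 0) (x 1) := by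
      simp [h0, h1, h2, Fin.sum_univ_four, pderiv_X, pd]; ring
    have e3 : eval x (pderiv 3 (C z0 * h0 + C z1 * h1 + C z2 * h2)) =
        pd z0 z1 z2 (x 3) (x 0) (x 1) (x 2) := by
      simp [h0, h1, h2, Fin.sum_univ_four, pderiv_X, pd]; ring
    rw [Fin.forall_fin_succ, Fin.forall_fin_succ, Fin.forall_fin_succ, Fin.forall_fin_one]
    rw [← e0, ← e1, ← e2, ← e3]
    rfl
  constructor
  · rintro ⟨x, hx, h⟩
    obtain ⟨a, b, c, d⟩ := (hpd x).mp h
    refine forward z0 z1 z2 (x 0) (x 1) (x 2) (x 3) ?_ a b c d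
    rintro ⟨p, q, r, s⟩
    apply hx
    funext i
    fin_cases i <;> simp [p, q, r, s]
  · intro h
    obtain ⟨a, b, c, d, hne, h⟩ := backward z0 z1 z2 h
    refine ⟨![a, b, c, d], ?_, (hpd _).mpr (by simpa using h)⟩
    intro h0
    apply hne
    exact ⟨congrFun h0 0, congrFun h0 1, congrFun h0 2, congrFun h0 3⟩
end
end
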